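/- arXiv:2104.07025 — 2 statements merged into one kernel-verified Lean document; each statement's English description precedes it below -/
import Mathlib

section
/- Let d, s be positive integers, p an odd prime, and r = 1 or r = -1 such that p^s + r ≥ d ≥ 3, gcd(p,d) = 1, and p^s ≡ -r (mod d), and let m = (d p^s - p^s - r)/d or m = p^s - 1. Then, modulo p^{s+5}, sum_{k=0}^{m} (2dk+r) (r/d)_k^6 / (k!)^6 ≡ ((2r/d)_{(dp^s-p^s-r)/d} / (1)_{(dp^s-p^s-r)/d}) * sum_{k=0}^{(dp^s-p^s-r)/d} ((r/d)_k^3 (1 - r/d)_k / ((k!)^3 (2r/d)_k)) * ( (d-1) p^s - (d-1)^3 p^{3s} * sum_{j=1}^{k} ( 1/(dj)^2 + 1/(dj-d+r)^2 ) ). -/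
open Finset

/-- Rising factorial `(x)_k = x(x+1)⋯(x+k-1)`. -/
def poch (x : ℚ) (k : ℕ) : ℚ := ∏ i ∈ Finset.range k, (x + i)

/-- `a ≡ b (mod p^m)`: the `p`-adic valuation of `a - b` is at least `m`. -/
def pcong (p : ℕ) (m : ℕ) (a b : ℚ) : Prop :=
  a = b ∨ (m : ℤ) ≤ padicValRat p (a - b)

/-- Generalized harmonic number `H_m^{(ℓ)} = ∑_{k=1}^m 1/k^ℓ`. -/
def harm (m ℓ : ℕ) : ℚ := ∑ k ∈ Finset.Icc 1 m, 1 / (k : ℚ) ^ ℓ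


lemma poch_zero (x : ℚ) : poch x 0 = 1 := by simp [poch]

lemma poch_succ (x : ℚ) (k : ℕ) : poch x (k+1) = poch x k * (x + k) := by
  simp [poch, Finset.prod_range_succ]

lemma poch_add (x : ℚ) (a b : ℕ) : poch x (a+b) = poch x a * poch (x+a) b := by
  simp only [poch, Finset.prod_range_add]
  congr 1
  apply Finset.prod_congr rfl
  intro i _
  push_cast; ring

lemma poch_succ' (x : ℚ) (k : ℕ) : poch x (k+1) = x * poch (x+1) k := by
  rw [add_comm k 1, poch_add, show poch x 1 = x by simp [poch]]
  simp

lemma poch_ne (x : ℚ) (k : ℕ) (h : ∀ i : ℕ, x + i ≠ 0) : poch x k ≠ 0 := by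
  rw [poch, Finset.prod_ne_zero_iff]
  intro i _
  exact h i

lemma poch_one (k : ℕ) : poch 1 k = (k.factorial : ℚ) := by
  induction k with
  | zero => simp [poch]
  | succ k ih => rw [poch_succ, ih, Nat.factorial_succ]; push_cast; ring

lemma poch_neg_zero (N k : ℕ) (h : N < k) : poch (-(N:ℚ)) k = 0 := by
  rw [poch, Finset.prod_eq_zero_iff]
  exact ⟨N, by simpa using h, by ring⟩

/-- reversal -/
lemma poch_rev (x : ℚ) (k : ℕ) : poch (1 - x - k) k = (-1)^k * poch x k := by
  induction k generalizing x with
  | zero => simp [poch]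
  | succ k ih =>
    rw [poch_succ', poch_succ]
    have := ih x
    rw [show (1 - x - ((k+1 : ℕ):ℚ) + 1) = 1 - x - k by push_cast; ring, this]
    push_cast; ring

/-- Newton basis -/
def ee (x : ℚ) (j k : ℕ) : ℚ :=
  (∏ i ∈ range j, ((k:ℚ) - i) * (k + x + i)) / (j.factorial : ℚ)^2

lemma ee_zero (x : ℚ) (k : ℕ) : ee x 0 k = 1 := by simp [ee]

lemma ee_succ (x : ℚ) (j k : ℕ) :
    ee x (j+1) k * ((j:ℚ)+1)^2 = ee x j k * (((k:ℚ) - j) * (k + x + j)) := by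
  have h1 : (j.factorial : ℚ) ≠ 0 := by positivity
  have h2 : (j:ℚ) + 1 ≠ 0 := by positivity
  simp only [ee, Finset.prod_range_succ, Nat.factorial_succ]
  push_cast
  field_simp

lemma ee_big (x : ℚ) (j k : ℕ) (h : k < j) : ee x j k = 0 := by
  rw [ee, Finset.prod_eq_zero (i := k) (by simpa using h)]
  · simp
  · simp

lemma choose_succ_cast (N j : ℕ) : (N.choose (j+1) : ℚ) * (j+1) = N.choose j * ((N:ℚ) - j) := by
  rcases le_or_gt j N with h | h
  · have := Nat.choose_succ_right_eq N j
    have h2 : ((N.choose (j+1) * (j+1) : ℕ):ℚ) = ((N.choose j * (N - j) : ℕ) : ℚ) := by rw [this]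
    push_cast [Nat.cast_sub h] at h2
    exact h2
  · rw [Nat.choose_eq_zero_of_lt h, Nat.choose_eq_zero_of_lt (by omega)]; simp

lemma ee_eq (x : ℚ) (j k : ℕ) :
    ee x j k = (k.choose j : ℚ) * (poch (k + x) j / j.factorial) := by
  induction j with
  | zero => simp [ee, poch]
  | succ j ih =>
    have h2 : (j:ℚ) + 1 ≠ 0 := by positivity
    have h1 : (j.factorial : ℚ) ≠ 0 := by positivity
    have h := ee_succ x j k
    rw [ih] at h
    have hc := choose_succ_cast k j
    rw [← mul_left_inj' (pow_ne_zero 2 h2), h, poch_succ, Nat.factorial_succ]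
    push_cast
    field_simp
    linear_combination (-(k + x + j)) * poch (k + x) j * hc

lemma sum_ee (x : ℚ) (j N : ℕ) :
    ∑ k ∈ range N, (2*(k:ℚ) + x) * ee x j k =
      (N.choose (j+1) : ℚ) * ((N + x - 1) * (poch (N + x) j / j.factorial)) := by
  induction N with
  | zero => simp
  | succ N ih =>
    have h1 : (j.factorial : ℚ) ≠ 0 := by positivity
    rw [Finset.sum_range_succ, ih, ee_eq, Nat.choose_succ_succ]
    have hc := choose_succ_cast N j
    have hp : (N + x) * poch (N + x + 1) j = poch (N+x) j * (N + x + j) := by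
      rw [← poch_succ', poch_succ]
    push_cast
    rw [show (N:ℚ) + 1 + x = N + x + 1 by ring]
    field_simp
    linear_combination (-(N.choose j : ℚ) - N.choose (j+1)) * hp - poch (N + x) j * hc

/-- structure constants -/
def cc (x : ℚ) (i j l : ℕ) : ℚ :=
  if l ≤ i + j then (l.choose i : ℚ) * l.choose j *
    (poch (x + l) (i + j - l) / (i + j - l).factorial) else 0

lemma cc_rec (x : ℚ) (i j l : ℕ) :
    ((i:ℚ)+1)^2 * cc x (i+1) j (l+1) =
      ((l:ℚ)+1)^2 * cc x i j l + ((l:ℚ)+1-i)*(l+1+i+x) * cc x i j (l+1) := by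
  have A := choose_succ_cast (l+1) i
  have B := Nat.add_one_mul_choose_eq l i
  have B' : ((l:ℚ)+1) * l.choose i = (l+1).choose (i+1) * (i+1) := by exact_mod_cast B
  have C : ((l:ℚ)+1) * l.choose j = (l+1).choose j * ((l:ℚ)+1-j) := by
    have h1 := choose_succ_cast (l+1) j
    have h2 := Nat.add_one_mul_choose_eq l j
    have h2' : ((l:ℚ)+1) * l.choose j = (l+1).choose (j+1) * (j+1) := by exact_mod_cast h2
    rw [h2', h1]; push_cast; ring
  push_cast at A
  unfold cc
  rcases lt_trichotomy l (i+j) with h | h | h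
  · obtain ⟨r, hr⟩ : ∃ r, i + j = l + 1 + r := ⟨i+j-l-1, by omega⟩
    rw [if_pos (by omega), if_pos (by omega), if_pos (by omega),
      show i + 1 + j - (l+1) = r + 1 by omega, show i + j - l = r+1 by omega,
      show i + j - (l+1) = r by omega, Nat.factorial_succ, poch_succ (x + (l+1:ℕ)), poch_succ' (x+l)]
    have h1 : (r.factorial : ℚ) ≠ 0 := by positivity
    have h2 : (r:ℚ) + 1 ≠ 0 := by positivity
    have hr' : (i:ℚ) + j = l + 1 + r := by exact_mod_cast hr
    have hj : (j:ℚ) = l + 1 + r - i := by linarith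
    push_cast
    rw [show x + (l:ℚ) + 1 = x + (l+1) by ring]
    field_simp
    rw [hj] at C
    set p := poch (x + (l+1)) r
    linear_combination ((i:ℚ)+1) * (l+1).choose j * p * (x + l + 1 + r) * A
      - p * (x + l) * (((l:ℚ)+1) * l.choose j) * (B' + A) - p * (x+l) * (l+1).choose i * (l+1-i) * C
  · subst h
    rw [if_pos (by omega), if_pos (by omega), if_neg (by omega)]
    rw [show i + 1 + j - (i+j+1) = 0 by omega, show i + j - (i+j) = 0 by omega]
    simp [poch]
    push_cast at *
    linear_combination - (i+j+1:ℚ) * (i+j).choose j * B' - (i+j+1).choose (i+1) * (i+1) * C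
  · rw [if_neg (by omega), if_neg (by omega), if_neg (by omega)]; simp

lemma cc_zero_right (x : ℚ) (j l : ℕ) : cc x 0 j l = if l = j then 1 else 0 := by
  unfold cc
  rcases lt_trichotomy l j with h | h | h
  · rw [if_pos (by omega), if_neg (by omega), Nat.choose_eq_zero_of_lt h]; simp
  · subst h; simp [poch]
  · rw [if_neg (by omega), if_neg (by omega)]

lemma cc_succ_zero (x : ℚ) (i j : ℕ) : 
    ((i:ℚ)+1)^2 * cc x (i+1) j 0 = ((0:ℚ)-i)*(0+i+x) * cc x i j 0 := by
  unfold cc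
  rcases i with _ | i
  · simp
  · simp

lemma ee_mul (x : ℚ) (i j k n : ℕ) (hk : k < n) :
    ee x i k * ee x j k = ∑ l ∈ range n, cc x i j l * ee x l k := by
  induction i with
  | zero =>
    simp only [cc_zero_right, ee_zero, one_mul, ite_mul, zero_mul]
    rw [Finset.sum_ite_eq']
    split_ifs with h
    · rfl
    · exact ee_big x j k (by simp at h; omega)
  | succ i ih =>
    have h2 : ((i:ℚ) + 1)^2 ≠ 0 := by positivity
    rw [← mul_left_inj' h2]
    have hl : ∀ l : ℕ, ee x l k * (((k:ℚ) - i) * (k + x + i)) =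
        ((l:ℚ)+1)^2 * ee x (l+1) k + ((l:ℚ)-i)*(l+i+x) * ee x l k := by
      intro l
      linear_combination - ee_succ x l k
    calc ee x (i+1) k * ee x j k * ((i:ℚ)+1)^2
        = (ee x (i+1) k * ((i:ℚ)+1)^2) * ee x j k := by ring
      _ = (ee x i k * ee x j k) * (((k:ℚ) - i) * (k + x + i)) := by rw [ee_succ]; ring
      _ = ∑ l ∈ range n, cc x i j l * (((l:ℚ)+1)^2 * ee x (l+1) k + ((l:ℚ)-i)*(l+i+x) * ee x l k) := by
        rw [ih, Finset.sum_mul]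
        apply Finset.sum_congr rfl
        intro l _
        rw [← hl]; ring
      _ = _ := by
        have key : ∀ M : ℕ, ∑ l ∈ range (M+1), cc x i j l * (((l:ℚ)+1)^2 * ee x (l+1) k + ((l:ℚ)-i)*(l+i+x) * ee x l k)
           = ((∑ l ∈ range (M+1), cc x (i+1) j l * ee x l k)) * ((i:ℚ)+1)^2
             + cc x i j M * ((M:ℚ)+1)^2 * ee x (M+1) k := by
          intro M
          induction M with
          | zero =>
            have := cc_succ_zero x i j
            simp
            linear_combination - ee x 0 k * this
          | succ M ihM =>
            rw [Finset.sum_range_succ, ihM, Finset.sum_range_succ _ (M+1)]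
            have := cc_rec x i j M
            push_cast
            linear_combination - ee x (M+1) k * this
        obtain ⟨M, rfl⟩ : ∃ M, n = M + 1 := ⟨n-1, by omega⟩
        rw [key, ee_big x (M+1) k hk]
        ring

lemma saal_tel (x y c e : ℚ) (he' : e = 1 + x + y - c) (k J : ℕ)
    (hc : ∀ i : ℕ, c + i ≠ 0) (he : ∀ i : ℕ, e + i ≠ 0) :
    ∑ j ∈ range (J+1), ((c+k)*(e+k) * ((-1)^j * ee x j (k+1) * (j.factorial * poch y j / (poch c j * poch e j)))
      - (c-y+k)*(1+x-c+k) * ((-1)^j * ee x j k * (j.factorial * poch y j / (poch c j * poch e j))))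
    = (2*k+1+x) * (-1)^J * (∏ i ∈ range J, ((k:ℚ)-i)*(k+x+1+i)) * poch y (J+1) /
        (J.factorial * poch c J * poch e J) := by
  induction J with
  | zero =>
    simp [ee, poch, he']; ring
  | succ J ih =>
    rw [Finset.sum_range_succ, ih]
    have h1 : (J.factorial : ℚ) ≠ 0 := by positivity
    have h2 : (J:ℚ) + 1 ≠ 0 := by positivity
    have h3 := hc J
    have h4 := he J
    have h5 := poch_ne c J hc
    have h6 := poch_ne e J he
    have e1 : ∀ J : ℕ, ∏ i ∈ range (J+1), (((k+1:ℕ):ℚ) - i) * ((k+1:ℕ) + x + i) =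
        (∏ i ∈ range J, ((k:ℚ)-i)*(k+x+1+i)) * ((k+1) * (k+x+1+J)) := by
      intro J
      induction J with
      | zero => rw [zero_add, Finset.prod_range_one, Finset.prod_range_zero]; push_cast; ring
      | succ J ih => rw [Finset.prod_range_succ, ih, Finset.prod_range_succ]; push_cast; ring
    have e2 : ∀ J : ℕ, ∏ i ∈ range (J+1), ((k:ℚ) - i) * (k + x + i) =
        (∏ i ∈ range J, ((k:ℚ)-i)*(k+x+1+i)) * ((k - J) * (k+x)) := by
      intro J
      induction J with
      | zero => simp
      | succ J ih => rw [Finset.prod_range_succ, ih, Finset.prod_range_succ]; push_cast; ring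
    simp only [ee]
    rw [e1, e2, Finset.prod_range_succ, poch_succ c, poch_succ e, poch_succ y (J+1), poch_succ y,
      Nat.factorial_succ]
    push_cast
    set H := ∏ i ∈ range J, ((k:ℚ)-i)*(k+x+1+i)
    field_simp
    rw [he']
    ring

lemma saal (x y c e : ℚ) (he' : e = 1 + x + y - c) (k n : ℕ) (hk : k < n)
    (hc : ∀ i : ℕ, c + i ≠ 0) (he : ∀ i : ℕ, e + i ≠ 0) :
    ∑ j ∈ range n, ((-1)^j * ee x j k * (j.factorial * poch y j / (poch c j * poch e j)))
    = poch (c-y) k * poch (1+x-c) k / (poch c k * poch e k) := by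
  induction k with
  | zero =>
    obtain ⟨M, rfl⟩ : ∃ M, n = M + 1 := ⟨n-1, by omega⟩
    rw [Finset.sum_range_succ', Finset.sum_eq_zero]
    · simp [ee, poch]
    · intro j _
      rw [ee_big x _ 0 (by omega)]; simp
  | succ k ih =>
    obtain ⟨M, rfl⟩ : ∃ M, n = M + 1 := ⟨n-1, by omega⟩
    have h := saal_tel x y c e he' k M hc he
    rw [Finset.prod_eq_zero (i := k) (by simp; omega) (by simp), Finset.sum_sub_distrib,
      ← Finset.mul_sum, ← Finset.mul_sum, ih (by omega)] at h
    have h3 := hc k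
    have h4 := he k
    have h5 := poch_ne c k hc
    have h6 := poch_ne e k he
    have h7 : (c + k) * (e+k) ≠ 0 := mul_ne_zero h3 h4
    rw [← mul_right_inj' h7]
    have h' := sub_eq_zero.mp (h.trans (by simp))
    rw [h', poch_succ c, poch_succ e, poch_succ (c-y), poch_succ (1+x-c)]
    field_simp

def vt (a b c : ℚ) (N k : ℕ) : ℚ :=
  (a+2*k) * poch a k * poch b k * poch c k * poch (-(N:ℚ)) k /
    (k.factorial * poch (1+a-b) k * poch (1+a-c) k * poch (1+a+N) k)

lemma vt_tel (a b c : ℚ) (N J : ℕ) (ha : ∀ i : ℕ, a + i ≠ 0)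
    (hb : ∀ i : ℕ, 1 + a - b + i ≠ 0) (hc : ∀ i : ℕ, 1 + a - c + i ≠ 0) :
    ∑ k ∈ range (J+1), ((1+a-b+N)*(1+a-c+N) * vt a b c (N+1) k - (a+N+1)*(1+a-b-c+N) * vt a b c N k)
    = poch a (J+1) * poch b (J+1) * poch c (J+1) * poch (-(N:ℚ)) J /
        (J.factorial * poch (1+a-b) J * poch (1+a-c) J * poch (2+a+N) J) := by
  induction J with
  | zero => simp [vt, poch]; ring
  | succ J ih =>
    rw [Finset.sum_range_succ, ih]
    have h1 : (J.factorial : ℚ) ≠ 0 := by positivity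
    have h2 : (J:ℚ) + 1 ≠ 0 := by positivity
    have h3 := hb J
    have h4 := hc J
    have h5 := poch_ne _ J hb
    have h6 := poch_ne _ J hc
    have h7 : poch (2+a+N) J ≠ 0 := by
      apply poch_ne
      intro i
      have := ha (2 + N + i)
      push_cast at this
      intro h; apply this; linarith
    have h8 : 2 + a + N + J ≠ 0 := by
      have := ha (2 + N + J)
      push_cast at this
      intro h; apply this; linarith
    have h9 : 1 + a + N ≠ 0 := by
      have := ha (1 + N)
      push_cast at this
      intro h; apply this; linarith
    simp only [vt]
    rw [show (-((N+1:ℕ):ℚ)) = -N - 1 by push_cast; ring, poch_succ' (-(N:ℚ)-1),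
      show -(N:ℚ) - 1 + 1 = -N by ring, show 1 + a + ((N+1:ℕ):ℚ) = 2 + a + N by push_cast; ring,
      poch_succ' (1+a+N), show 1 + a + (N:ℚ) + 1 = 2 + a + N by ring]
    simp only [poch_succ, Nat.factorial_succ]
    push_cast
    field_simp
    ring

lemma vt_sum (a b c : ℚ) (N : ℕ) (ha : ∀ i : ℕ, a + i ≠ 0)
    (hb : ∀ i : ℕ, 1 + a - b + i ≠ 0) (hc : ∀ i : ℕ, 1 + a - c + i ≠ 0) :
    ∑ k ∈ range (N+1), vt a b c N k =
      poch a (N+1) * poch (1+a-b-c) N / (poch (1+a-b) N * poch (1+a-c) N) := by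
  induction N with
  | zero => simp [vt, poch]
  | succ N ih =>
    have h := vt_tel a b c N (N+1) ha hb hc
    rw [poch_neg_zero N (N+1) (by omega), Finset.sum_sub_distrib, ← Finset.mul_sum, ← Finset.mul_sum,
      Finset.sum_range_succ (fun k => vt a b c N k), ih] at h
    have hv : vt a b c N (N+1) = 0 := by
      rw [vt, poch_neg_zero N (N+1) (by omega)]; simp
    rw [hv] at h
    have h3 := hb N
    have h4 := hc N
    have h5 := poch_ne _ N hb
    have h6 := poch_ne _ N hc
    have h7 := mul_ne_zero h3 h4
    rw [← mul_right_inj' h7]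
    have h' := sub_eq_zero.mp (h.trans (by simp))
    rw [h']
    simp only [poch_succ]
    push_cast
    field_simp
    ring

/-- `p^e` divides `y` in the localization at `p` -/
def pd (p e : ℕ) (y : ℚ) : Prop := padicNorm p y ≤ (p:ℚ)^(-(e:ℤ))

section padic
variable {p : ℕ} [hp : Fact p.Prime]

lemma pd_zero (e : ℕ) : pd p e 0 := by
  simp [pd]

lemma pd_add {e : ℕ} {x y : ℚ} (hx : pd p e x) (hy : pd p e y) : pd p e (x + y) :=
  le_trans padicNorm.nonarchimedean (max_le hx hy)

lemma pd_neg {e : ℕ} {x : ℚ} (hx : pd p e x) : pd p e (-x) := by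
  unfold pd; rw [padicNorm.neg]; exact hx

lemma pd_sub {e : ℕ} {x y : ℚ} (hx : pd p e x) (hy : pd p e y) : pd p e (x - y) := by
  rw [sub_eq_add_neg]; exact pd_add hx (pd_neg hy)

lemma pd_mul {e f : ℕ} {x y : ℚ} (hx : pd p e x) (hy : pd p f y) : pd p (e + f) (x * y) := by
  have hp0 : (p:ℚ) ≠ 0 := by exact_mod_cast hp.out.ne_zero
  unfold pd at *
  rw [padicNorm.mul, show (-((e+f:ℕ):ℤ)) = -(e:ℤ) + -(f:ℤ) by push_cast; ring, zpow_add₀ hp0]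
  exact mul_le_mul hx hy (padicNorm.nonneg _) (by positivity)

lemma pd_mono {e f : ℕ} {x : ℚ} (h : f ≤ e) (hx : pd p e x) : pd p f x := by
  refine le_trans hx ?_
  apply zpow_le_zpow_right₀
  · exact_mod_cast hp.out.one_le
  · omega

lemma pd_mul_left {e : ℕ} {x y : ℚ} (hx : pd p 0 x) (hy : pd p e y) : pd p e (x * y) := by
  simpa using pd_mul hx hy

lemma pd_mul_right {e : ℕ} {x y : ℚ} (hx : pd p e x) (hy : pd p 0 y) : pd p e (x * y) := by
  simpa using pd_mul hx hy

lemma pd_sum {ι : Type*} {e : ℕ} (S : Finset ι) (f : ι → ℚ) (h : ∀ i ∈ S, pd p e (f i)) :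
    pd p e (∑ i ∈ S, f i) := by
  classical
  induction S using Finset.induction_on with
  | empty => simpa using pd_zero e
  | insert a S ha ih =>
    rw [Finset.sum_insert ha]
    exact pd_add (h a (by simp)) (ih fun i hi => h i (by simp [hi]))

lemma pd_int (z : ℤ) : pd p 0 (z:ℚ) := by
  simpa [pd] using padicNorm.of_int z

lemma pd_nat (z : ℕ) : pd p 0 (z:ℚ) := by
  simpa [pd] using padicNorm.of_nat z

lemma pd_one : pd p 0 (1:ℚ) := by simp [pd]

lemma pd_pow_neg_one (j : ℕ) : pd p 0 ((-1:ℚ)^j) := by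
  have := pd_int (p := p) ((-1)^j)
  simpa using this

lemma pd_pow {e : ℕ} {x : ℚ} (hx : pd p e x) (k : ℕ) : pd p (k * e) (x^k) := by
  induction k with
  | zero => simpa using pd_one
  | succ k ih => rw [pow_succ, add_mul, one_mul]; exact pd_mul ih hx

lemma pd_pow0 {x : ℚ} (hx : pd p 0 x) (k : ℕ) : pd p 0 (x^k) := by
  simpa using pd_pow hx k

lemma pd_one_iff (w : ℚ) : pd p 1 w ↔ padicNorm p w < 1 := by
  have hp1 : (1:ℚ) < p := by exact_mod_cast hp.out.one_lt
  constructor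
  · intro h
    refine lt_of_le_of_lt h ?_
    simpa using inv_lt_one_of_one_lt₀ hp1
  · intro h
    by_cases h0 : w = 0
    · subst h0; exact pd_zero 1
    · unfold pd
      rw [padicNorm.eq_zpow_of_nonzero h0] at h ⊢
      rw [← zpow_zero (p:ℚ), zpow_lt_zpow_iff_right₀ hp1] at h
      apply zpow_le_zpow_right₀ hp1.le
      push_cast; omega

lemma pd_div_not {s : ℕ} {t y : ℚ} (ht : pd p s t) (hy : ¬ pd p s y) : pd p 1 (t / y) := by
  rw [pd_one_iff, padicNorm.div]
  unfold pd at *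
  push Not at hy
  have : 0 < padicNorm p y := lt_of_le_of_lt (by positivity) hy
  rw [div_lt_one this]
  exact lt_of_le_of_lt ht hy

lemma not_pd_nat {s i : ℕ} (h0 : 0 < i) (h : i < p^s) : ¬ pd p s (i:ℚ) := by
  intro hh
  have h2 := (padicNorm.dvd_iff_norm_le (p := p) (n := s) (z := (i:ℤ))).mpr (by simpa [pd] using hh)
  have h3 : p^s ∣ i := by exact_mod_cast h2
  exact absurd (Nat.le_of_dvd h0 h3) (by omega)

lemma pd_ppow (s : ℕ) : pd p s ((p:ℚ)^s) := by
  have h2 := (padicNorm.dvd_iff_norm_le (p := p) (n := s) (z := ((p^s : ℕ):ℤ))).mp (dvd_refl _)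
  unfold pd
  convert h2 using 2
  push_cast; rfl

lemma not_pd_add {s : ℕ} {y t : ℚ} (hy : ¬ pd p s y) (ht : pd p s t) : ¬ pd p s (y + t) := by
  intro h; apply hy
  have := pd_sub h ht
  simpa using this

lemma not_pd_neg {s : ℕ} {y : ℚ} (hy : ¬ pd p s y) : ¬ pd p s (-y) := by
  intro h; apply hy
  have := pd_neg h
  simpa using this

lemma ne_of_not_pd {s : ℕ} {y : ℚ} (hy : ¬ pd p s y) : y ≠ 0 := by
  rintro rfl; exact hy (pd_zero s)

lemma norm_of_unit {y : ℚ} (hy : pd p 1 (y - 1)) : padicNorm p y = 1 := by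
  rw [pd_one_iff] at hy
  have h := padicNorm.add_eq_max_of_ne (p := p) (q := y - 1) (r := 1) (by rw [padicNorm.one]; exact hy.ne)
  rw [sub_add_cancel, padicNorm.one, max_eq_right hy.le] at h
  exact h

lemma pd_div_unit {e : ℕ} {z y : ℚ} (hz : pd p e z) (hy : pd p 1 (y - 1)) : pd p e (z / y) := by
  unfold pd
  rw [padicNorm.div, norm_of_unit hy, div_one]
  exact hz

lemma ne_zero_of_unit {y : ℚ} (hy : pd p 1 (y - 1)) : y ≠ 0 := by
  rintro rfl
  have := norm_of_unit hy
  simp at this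

lemma pd_zero_of_unit {e : ℕ} {y : ℚ} (hy : pd p e (y - 1)) : pd p 0 y := by
  have := pd_add (pd_mono (Nat.zero_le _) hy) pd_one
  simpa using this

lemma pd_inv_unit {e : ℕ} {y : ℚ} (he : 1 ≤ e) (hy : pd p e (y - 1)) : pd p e (1 / y - 1) := by
  have h0 := ne_zero_of_unit (pd_mono he hy)
  have : 1 / y - 1 = -(y - 1) / y := by field_simp; ring
  rw [this]
  exact pd_div_unit (pd_neg hy) (pd_mono he hy)

/-- product of `1 - f` -/
lemma pd_prod {ι : Type*} {e : ℕ} (S : Finset ι) (f : ι → ℚ) (h : ∀ i ∈ S, pd p e (f i)) :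
    pd p (e+e) (∏ i ∈ S, (1 - f i) - (1 - ∑ i ∈ S, f i)) := by
  classical
  induction S using Finset.induction_on with
  | empty => simpa using pd_zero _
  | insert a S ha ih =>
    rw [Finset.sum_insert ha, Finset.prod_insert ha]
    have h1 := ih fun i hi => h i (by simp [hi])
    have ha' := h a (by simp)
    have hs := pd_sum S f fun i hi => h i (by simp [hi])
    have h3 : pd p 0 (1 - f a) := pd_sub pd_one (pd_mono (Nat.zero_le _) ha')
    have : (1 - f a) * ∏ i ∈ S, (1 - f i) - (1 - (f a + ∑ i ∈ S, f i)) =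
      (1 - f a) * (∏ i ∈ S, (1 - f i) - (1 - ∑ i ∈ S, f i)) + f a * ∑ i ∈ S, f i := by ring
    rw [this]
    exact pd_add (pd_mul_left h3 h1) (pd_mul ha' hs)

lemma pd_prod1 {ι : Type*} {e : ℕ} (S : Finset ι) (f : ι → ℚ) (h : ∀ i ∈ S, pd p e (f i)) :
    pd p e (∏ i ∈ S, (1 - f i) - 1) := by
  have h1 := pd_mono (by omega : e ≤ e + e) (pd_prod S f h)
  have h2 := pd_sum S f h
  have := pd_sub h1 h2
  convert this using 1; ring

lemma poch_ratio (a τ : ℚ) (k : ℕ) (h0 : ∀ i < k, a + i ≠ 0) (h : ∀ i < k, pd p 1 (τ / (a + i))) :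
    pd p 1 (poch (a + τ) k / poch a k - 1) := by
  have := pd_prod1 (p := p) (range k) (fun i => - (τ / (a + i))) (fun i hi => pd_neg (h i (by simpa using hi)))
  convert this using 2
  simp only [poch]
  rw [← Finset.prod_div_distrib]
  apply Finset.prod_congr rfl
  intro i hi
  have := h0 i (by simpa using hi)
  field_simp
  ring

lemma poch_int {y : ℚ} (hy : pd p 0 y) (k : ℕ) : pd p 0 (poch y k / k.factorial) := by
  have hy' : ‖(y : ℚ_[p])‖ ≤ 1 := by
    rw [Padic.eq_padicNorm]
    have : padicNorm p y ≤ 1 := by simpa [pd] using hy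
    exact_mod_cast this
  obtain ⟨Y, hY⟩ : ∃ Y : ℤ_[p], (Y : ℚ_[p]) = (y : ℚ_[p]) := ⟨⟨y, hy'⟩, rfl⟩
  have h := PadicInt.norm_ascPochhammer_le (p := p) k Y
  have e1 : (((ascPochhammer ℤ_[p] k).eval Y : ℤ_[p]) : ℚ_[p]) = ((poch y k : ℚ) : ℚ_[p]) := by
    clear h
    induction k with
    | zero => simp [poch]
    | succ k ih =>
      rw [ascPochhammer_succ_eval, poch_succ]
      push_cast
      rw [ih, hY]
  rw [PadicInt.norm_def, PadicInt.norm_def, e1] at h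
  rw [show (((k.factorial : ℤ_[p])) : ℚ_[p]) = ((k.factorial : ℚ) : ℚ_[p]) by push_cast; rfl] at h
  rw [Padic.eq_padicNorm, Padic.eq_padicNorm] at h
  have h' : padicNorm p (poch y k) ≤ padicNorm p (k.factorial : ℚ) := by exact_mod_cast h
  have h0 : (k.factorial : ℚ) ≠ 0 := by positivity
  have h1 : 0 < padicNorm p (k.factorial : ℚ) := lt_of_le_of_ne (padicNorm.nonneg _) (padicNorm.nonzero h0).symm
  unfold pd
  rw [padicNorm.div, div_le_iff₀ h1]
  simpa using h'

end padic

lemma poch_vander (a b : ℚ) (k : ℕ) :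
    poch (a + b) k / k.factorial =
      ∑ ij ∈ antidiagonal k, poch a ij.1 / (ij.1.factorial:ℚ) * (poch b ij.2 / (ij.2.factorial:ℚ)) := by
  have hs : ∀ (y : ℚ) (i : ℕ), ((i:ℚ) + 1) * (poch y (i+1) / ((i+1).factorial:ℚ)) =
      (y + i) * (poch y i / (i.factorial:ℚ)) := by
    intro y i
    have h0 : (i.factorial : ℚ) ≠ 0 := by positivity
    have h2 : (i:ℚ) + 1 ≠ 0 := by positivity
    rw [poch_succ, Nat.factorial_succ]; push_cast; field_simp
  induction k with
  | zero => simp [poch]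
  | succ k ih =>
    have h2 : (k:ℚ) + 1 ≠ 0 := by positivity
    rw [← mul_right_inj' h2, hs, ih]
    have e1 : ((k:ℚ)+1) * ∑ ij ∈ antidiagonal (k+1), poch a ij.1 / (ij.1.factorial:ℚ) * (poch b ij.2 / (ij.2.factorial:ℚ))
      = ∑ ij ∈ antidiagonal (k+1), ((ij.1:ℚ) * (poch a ij.1 / (ij.1.factorial:ℚ)) * (poch b ij.2 / (ij.2.factorial:ℚ)))
       + ∑ ij ∈ antidiagonal (k+1), (poch a ij.1 / (ij.1.factorial:ℚ) * ((ij.2:ℚ) * (poch b ij.2 / (ij.2.factorial:ℚ)))) := by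
      rw [Finset.mul_sum, ← Finset.sum_add_distrib]
      apply Finset.sum_congr rfl
      intro ij hij
      have : (ij.1:ℚ) + ij.2 = k + 1 := by exact_mod_cast (mem_antidiagonal.mp hij)
      rw [← this]; ring
    rw [e1, Finset.Nat.sum_antidiagonal_succ, Finset.Nat.sum_antidiagonal_succ', Finset.mul_sum]
    push_cast
    simp only [hs, zero_mul, mul_zero, zero_add, add_zero]
    rw [← Finset.sum_add_distrib]
    apply Finset.sum_congr rfl
    intro ij hij
    have : (ij.1:ℚ) + ij.2 = k := by exact_mod_cast (mem_antidiagonal.mp hij)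
    rw [← this]; ring

section padic2
variable {p : ℕ} [hp : Fact p.Prime]

lemma pd_div_nat {s i : ℕ} {t : ℚ} (ht : pd p s t) (h0 : 0 < i) (h : i < p^s) : pd p 1 (t / i) :=
  pd_div_not ht (not_pd_nat h0 h)

lemma poch_small {s k : ℕ} {t : ℚ} (ht : pd p s t) (h0 : 0 < k) (h : k < p^s) :
    pd p 1 (poch t k / k.factorial) := by
  obtain ⟨i, rfl⟩ : ∃ i, k = i + 1 := ⟨k-1, by omega⟩
  have h0 : (i.factorial : ℚ) ≠ 0 := by positivity
  have h2 : (i:ℚ) + 1 ≠ 0 := by positivity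
  have : poch t (i+1) / ((i+1).factorial : ℚ) = t / ((i+1:ℕ):ℚ) * (poch (t+1) i / i.factorial) := by
    rw [poch_succ', Nat.factorial_succ]; push_cast; field_simp
  rw [this]
  exact pd_mul_right (pd_div_nat ht (by omega) h)
    (poch_int (pd_add (pd_mono (Nat.zero_le _) ht) pd_one) i)

/-- Lucas type congruence -/
lemma poch_lucas {s k : ℕ} {y t : ℚ} (hy : pd p 0 y) (ht : pd p s t) (h : k < p^s) :
    pd p 1 (poch (y + t) k / k.factorial - poch y k / k.factorial) := by
  rcases k with _ | k
  · simp [poch]; exact pd_zero 1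
  rw [poch_vander, Finset.Nat.sum_antidiagonal_succ']
  simp only [poch_zero, Nat.factorial_zero]
  simp only [Nat.cast_one, div_one, mul_one]
  rw [add_comm, add_sub_cancel_right]
  · apply pd_sum
    intro ij hij
    have := mem_antidiagonal.mp hij
    exact pd_mul_left (poch_int hy _) (poch_small ht (by omega) (by omega))

lemma poch_div {s k i : ℕ} {y : ℚ} (hy : pd p s (y + i)) (hi : i < k) (h : k < p^s) :
    pd p 1 (poch y k / k.factorial) := by
  have := poch_lucas (k := k) (y := -(i:ℚ)) (t := y + i) (pd_neg (pd_nat i)) hy h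
  rw [poch_neg_zero i k hi] at this
  simpa using this

lemma poch_one_unit {s k : ℕ} {t : ℚ} (ht : pd p s t) (h : k < p^s) :
    pd p 1 (poch (1 + t) k / k.factorial - 1) := by
  rw [← poch_one]
  apply poch_ratio
  · intro i _; positivity
  · intro i hi
    have := pd_div_nat (i := i+1) ht (by omega) (by omega)
    push_cast at this
    rwa [add_comm (1:ℚ)]

end padic2

lemma sum_shift (x : ℚ) (f : ℕ → ℚ) (i N : ℕ) :
    ∑ k ∈ range (i + N + 1), f k * ee x i k = ∑ l ∈ range (N+1), f (i+l) * ee x i (i+l) := by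
  rw [add_assoc, Finset.sum_range_add, Finset.sum_eq_zero, zero_add]
  intro k hk
  rw [ee_big x i k (by simpa using hk), mul_zero]

lemma ee_shift (x : ℚ) (i l : ℕ) (hx : ∀ z : ℤ, x + z ≠ 0) :
    ee x i (i+l) = poch (1 + (i:ℚ)) l / l.factorial *
      (poch x (2*i) * poch (x + 2*i) l / poch x (i+l) / (i.factorial:ℚ)) := by
  have hx' : ∀ i : ℕ, x + i ≠ 0 := fun i => by exact_mod_cast hx i
  have h0 : (i.factorial : ℚ) ≠ 0 := by positivity
  have h1 : (l.factorial : ℚ) ≠ 0 := by positivity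
  have h2 := poch_ne x (i+l) hx'
  rw [ee_eq]
  have e1 : ((i+l).choose i : ℚ) = poch (1+(i:ℚ)) l / l.factorial := by
    have := Nat.add_choose_mul_factorial_mul_factorial i l
    rw [← Nat.choose_symm_add] at this
    have t : (((i+l).choose i : ℕ):ℚ) * i.factorial * l.factorial = (i+l).factorial := by exact_mod_cast this
    have t2 : ((i+l).factorial : ℚ) = i.factorial * poch (1+(i:ℚ)) l := by
      rw [← poch_one, poch_add, poch_one]
    rw [t2] at t
    field_simp
    apply mul_left_cancel₀ h0
    linarith
  have e2 : poch x (i+l) * poch (x + (i+l:ℕ)) i = poch x (2*i) * poch (x+2*i) l := by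
    rw [← poch_add, show i + l + i = 2*i + l by ring, poch_add]; push_cast; rfl
  rw [e1, ← e2, add_comm ((i+l:ℕ):ℚ)]
  field_simp

/-- `φ_k(a)` -/
def ph (x a : ℚ) (k : ℕ) : ℚ := poch (x+a) k * poch (x-a) k / (poch (1-a) k * poch (1+a) k)

section alg
variable (x t : ℚ) (m : ℕ) 

lemma whip1 (htm : x + m = t) (hx : ∀ z : ℤ, x + z ≠ 0) (h2x : ∀ z : ℤ, 2 * x + z ≠ 0) (i : ℕ) (hi : i ≤ m) :
    ∑ k ∈ range (m+1), ((2*(k:ℚ)+x) * (poch x k^2/(k.factorial:ℚ)^2) * ph x t k) * ee x i k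
    = t * (-1)^i * (poch x i * poch (x+t) i * poch (x-t) i) * poch (2*x) m /
      (poch (2*x) i * (i.factorial:ℚ)^2 * m.factorial) := by
  obtain ⟨N, rfl⟩ := Nat.exists_eq_add_of_le hi
  have hx' : ∀ i : ℕ, x + i ≠ 0 := fun i => by exact_mod_cast hx i
  have h2x' : ∀ i : ℕ, 2*x + i ≠ 0 := fun i => by exact_mod_cast h2x i
  have ht1 : ∀ j : ℕ, 1 - t + j ≠ 0 := fun j h => hx (i+N-1-j) (by push_cast at htm ⊢; linarith)
  have ht2 : ∀ j : ℕ, 1 + t + j ≠ 0 := fun j h => hx (i+N+1+j) (by push_cast at htm ⊢; linarith)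
  have hfi : ∀ j : ℕ, 1 + (i:ℚ) + j ≠ 0 := fun j => by positivity
  rw [sum_shift]
  have key : ∀ l : ℕ, ((2*((i+l:ℕ):ℚ)+x) * (poch x (i+l)^2/((i+l).factorial:ℚ)^2) * ph x t (i+l)) * ee x i (i+l)
     = (poch x i * poch x (2*i) * poch (x+t) i * poch (x-t) i /
        ((i.factorial:ℚ)^3 * poch (1-t) i * poch (1+t) i)) *
        vt (x+2*i) (x+i) (x+t+i) N l := by
    intro l
    have n1 := poch_ne x i hx'
    have n2 := poch_ne (x+i) l (fun j => by have := hx' (i+j); push_cast at this; rwa [add_assoc])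
    have n3 := poch_ne (1-t) i ht1
    have n4 := poch_ne (1-t+i) l (fun j => by have := ht1 (i+j); push_cast at this; rwa [add_assoc])
    have n5 := poch_ne (1+t) i ht2
    have n6 := poch_ne (1+t+i) l (fun j => by have := ht2 (i+j); push_cast at this; rwa [add_assoc])
    have n7 := poch_ne (1+(i:ℚ)) l hfi
    have h0 : (i.factorial : ℚ) ≠ 0 := by positivity
    have h1 : (l.factorial : ℚ) ≠ 0 := by positivity
    rw [ee_shift x i l hx]
    unfold vt ph
    rw [← poch_one (i+l)]
    simp only [poch_add, poch_one]
    rw [show -(N:ℚ) = x - t + i by push_cast at htm; linarith,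
      show 1 + (x+2*i) - (x+i) = 1 + (i:ℚ) by ring,
      show 1 + (x+2*i) - (x+t+i) = 1 - t + (i:ℚ) by ring,
      show 1 + (x+2*i) + N = 1 + t + (i:ℚ) by push_cast at htm; linarith]
    push_cast
    field_simp
    ring
  rw [Finset.sum_congr rfl (fun l _ => key l), ← Finset.mul_sum, vt_sum]
  · rw [show 1 + (x+2*i) - (x+i) = 1 + (i:ℚ) by ring,
      show 1 + (x+2*i) - (x+t+i) = 1 - t + (i:ℚ) by ring,
      show 1 + (i:ℚ) - (x+t+i) = 1 - (2*x+i) - (N:ℚ) by push_cast at htm; linarith,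
      poch_rev]
    have E1 : poch x (2*i) * poch (x+2*i) (N+1) = poch x (i+N) * (t * poch (1+t) i) := by
      have a := poch_add x (2*i) (N+1)
      push_cast at a
      rw [← a, show 2*i+(N+1) = (i+N)+(i+1) by ring, poch_add, htm, poch_succ', add_comm t]
    have E2 : (i.factorial : ℚ) * poch (1+(i:ℚ)) N = (i+N).factorial := by
      rw [← poch_one, ← poch_add, poch_one]
    have E3 : poch (1-t) i * poch (1-t+i) N = (-1)^(i+N) * poch x (i+N) := by
      rw [← poch_add, ← poch_rev, ← htm]; congr 1; ring
    have E4 : poch (2*x) i * poch (2*x+i) N = poch (2*x) (i+N) := by rw [poch_add]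
    have n1 := poch_ne x (i+N) hx'
    have n3 := poch_ne (1-t) i ht1
    have n4 := poch_ne (1-t+i) N (fun j => by have := ht1 (i+j); push_cast at this; rwa [add_assoc])
    have n5 := poch_ne (1+t) i ht2
    have n7 := poch_ne (1+(i:ℚ)) N hfi
    have n8 := poch_ne (2*x) i h2x'
    have h0 : (i.factorial : ℚ) ≠ 0 := by positivity
    rw [← E4, ← E2]
    have s1 : ((-1:ℚ)^(i+N)) * ((-1)^(i+N)) = 1 := by rw [← mul_pow]; simp
    have s2 : ((-1:ℚ)^N) = (-1)^i * (-1)^(i+N) := by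
      rw [pow_add, ← mul_assoc, ← mul_pow]; simp
    rw [s2]
    have E5 : poch x (i+N) = (-1)^(i+N) * (poch (1-t) i * poch (1-t+i) N) := by
      rw [E3, ← mul_assoc, s1, one_mul]
    rw [E5] at E1
    clear s2 E3 E4 E2 E5 key
    generalize (-1:ℚ)^(i+N) = S at *
    generalize (-1:ℚ)^i = R at *
    generalize poch (2*x) i = G1 at *
    generalize poch (2*x+i) N = G2 at *
    generalize poch (1-t) i = G3 at *
    generalize poch (1-t+i) N = G4 at *
    generalize poch (1+t) i = G5 at *
    generalize poch (1+(i:ℚ)) N = G6 at *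
    generalize (i.factorial:ℚ) = G7 at *
    generalize poch x (2*i) = G8 at *
    generalize poch (x+2*i) (N+1) = G9 at *
    field_simp
    linear_combination (poch x i * poch (x + t) i * poch (x - t) i * R * G2) * (S * E1 + (G3 * G4 * t * G5) * s1)
  · intro j h; exact hx (2*i+j) (by push_cast; linarith)
  · intro j h; exact hfi j (by linarith)
  · intro j h; exact ht1 (i+j) (by push_cast; linarith)

lemma whip (htm : x + m = t) (hx : ∀ z : ℤ, x + z ≠ 0) (h2x : ∀ z : ℤ, 2 * x + z ≠ 0) (b : ℚ)
    (hb1 : ∀ i : ℕ, 1 - b + i ≠ 0) (hb2 : ∀ i : ℕ, 1 + b + i ≠ 0) :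
    ∑ k ∈ range (m+1), (2*(k:ℚ)+x) * (poch x k^2/(k.factorial:ℚ)^2) * ph x t k * ph x b k
    = t * ∑ k ∈ range (m+1), (poch (2*x) m / m.factorial * (poch x k^3 * poch (1-x) k /
        ((k.factorial:ℚ)^3 * poch (2*x) k))) * (poch (x+t) k * poch (x-t) k / poch x k^2) *
        ((k.factorial:ℚ)^2 / (poch (1-b) k * poch (1+b) k)) := by
  have hx' : ∀ i : ℕ, x + i ≠ 0 := fun i => by exact_mod_cast hx i
  have h2x' : ∀ i : ℕ, 2*x + i ≠ 0 := fun i => by exact_mod_cast h2x i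
  have e1 : ∀ k ∈ range (m+1), (2*(k:ℚ)+x) * (poch x k^2/(k.factorial:ℚ)^2) * ph x t k * ph x b k
    = ∑ j ∈ range (m+1), ((-1)^j * (j.factorial * poch (1-x) j / (poch (1-b) j * poch (1+b) j))) *
      (((2*(k:ℚ)+x) * (poch x k^2/(k.factorial:ℚ)^2) * ph x t k) * ee x j k) := by
    intro k hk
    have := saal x (1-x) (1-b) (1+b) (by ring) k (m+1) (by simpa using hk) hb1 hb2
    rw [show 1 - b - (1-x) = x - b by ring, show 1 + x - (1-b) = x + b by ring] at this
    have e : ph x b k = poch (x-b) k * poch (x+b) k / (poch (1-b) k * poch (1+b) k) := by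
      unfold ph; ring
    rw [e, ← this, Finset.mul_sum]
    apply Finset.sum_congr rfl
    intro j _; ring
  rw [Finset.sum_congr rfl e1, Finset.sum_comm, Finset.mul_sum]
  apply Finset.sum_congr rfl
  intro j hj
  rw [← Finset.mul_sum, whip1 x t m htm hx h2x j (by simp at hj; omega)]
  have n1 := poch_ne x j hx'
  have n2 := poch_ne (1-b) j hb1
  have n3 := poch_ne (1+b) j hb2
  have n8 := poch_ne (2*x) j h2x'
  have h0 : (j.factorial : ℚ) ≠ 0 := by positivity
  have h1 : (m.factorial : ℚ) ≠ 0 := by positivity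
  have s1 : ((-1:ℚ)^j) * ((-1)^j) = 1 := by rw [← mul_pow]; simp
  have s2 : ((-1:ℚ)^j)^2 = 1 := by rw [sq, s1]
  field_simp
  try rw [s2]
  try ring

/-- the orthogonality -/
lemma orth (htm : x + m = t) (hx : ∀ z : ℤ, x + z ≠ 0) (l : ℕ) (hl : l < m) :
    ∑ k ∈ range (m+1), ((2*(k:ℚ)+x) * (poch x k * poch (x-t) k/((k.factorial:ℚ) * poch (1+t) k))) * ee x l k = 0 := by
  obtain ⟨N, rfl⟩ := Nat.exists_eq_add_of_lt hl
  have hx' : ∀ i : ℕ, x + i ≠ 0 := fun i => by exact_mod_cast hx i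
  have ht2 : ∀ j : ℕ, 1 + t + j ≠ 0 := fun j h => hx (l+N+1+1+j) (by push_cast at htm ⊢; linarith)
  have hfi : ∀ j : ℕ, 1 + (l:ℚ) + j ≠ 0 := fun j => by positivity
  rw [add_assoc l N 1, sum_shift]
  have key : ∀ i : ℕ, ((2*((l+i:ℕ):ℚ)+x) * (poch x (l+i) * poch (x-t) (l+i)/(((l+i).factorial:ℚ) * poch (1+t) (l+i)))) * ee x l (l+i)
     = (poch x (2*l) * poch (x-t) l /
        ((l.factorial:ℚ)^2 * poch (1+t) l)) *
        vt (x+2*l) 1 (x+2*l) (N+1) i := by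
    intro i
    have n1 := poch_ne x l hx'
    have n2 := poch_ne (x+l) i (fun j => by have := hx' (l+j); push_cast at this; rwa [add_assoc])
    have n2' := poch_ne (x+2*l) i (fun j => by have := hx' (2*l+j); push_cast at this; rwa [add_assoc])
    have n5 := poch_ne (1+t) l ht2
    have n6 := poch_ne (1+t+l) i (fun j => by have := ht2 (l+j); push_cast at this; rwa [add_assoc])
    have n7 := poch_ne (1+(l:ℚ)) i hfi
    have h0 : (l.factorial : ℚ) ≠ 0 := by positivity
    have h1 : (i.factorial : ℚ) ≠ 0 := by positivity
    rw [ee_shift x l i hx]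
    unfold vt
    rw [← poch_one (l+i)]
    rw [show -((N+1:ℕ):ℚ) = x - t + l by push_cast at htm ⊢; linarith,
      show 1 + (x+2*l) - 1 = x + 2*(l:ℚ) by ring,
      show 1 + (x+2*l) - (x+2*l) = (1:ℚ) by ring,
      show 1 + (x+2*l) + (N+1:ℕ) = 1 + t + (l:ℚ) by push_cast at htm ⊢; linarith]
    simp only [poch_add, poch_one]
    push_cast
    field_simp
    try ring
  rw [Finset.sum_congr rfl (fun l _ => key l), ← Finset.mul_sum, vt_sum]
  · rw [show 1 + (x+2*l) - 1 - (x+2*l) = (-((0:ℕ):ℚ)) by push_cast; ring, poch_neg_zero 0 (N+1) (by omega)]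
    simp
  · intro j h; exact hx (2*l+j) (by push_cast; linarith)
  · intro j h; exact hx (2*l+j) (by push_cast; linarith)
  · intro j h; have : (0:ℚ) ≤ j := by positivity
    linarith
end alg

section padic3
variable {p : ℕ} [hp : Fact p.Prime]

/-- `f` is in the lattice spanned by the Newton basis times `p^e` -/
def II (p : ℕ) (x : ℚ) (n e : ℕ) (f : ℕ → ℚ) : Prop :=
  ∃ a : ℕ → ℚ, (∀ j < n, pd p e (a j)) ∧ ∀ k < n, f k = ∑ j ∈ range n, a j * ee x j k

lemma cc_int {x : ℚ} (hx : pd p 0 x) (i j l : ℕ) : pd p 0 (cc x i j l) := by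
  unfold cc
  split_ifs
  · exact pd_mul_left (pd_mul_left (pd_nat _) (pd_nat _)) (poch_int (pd_add hx (pd_nat _)) _)
  · exact pd_zero 0

lemma ee_conv (x : ℚ) (n : ℕ) (a b : ℕ → ℚ) (k : ℕ) (hk : k < n) :
    (∑ j ∈ range n, a j * ee x j k) * (∑ j ∈ range n, b j * ee x j k) =
    ∑ l ∈ range n, (∑ i ∈ range n, ∑ j ∈ range n, a i * b j * cc x i j l) * ee x l k := by
  rw [Finset.sum_mul_sum]
  simp_rw [Finset.sum_mul]
  conv_rhs => rw [Finset.sum_comm]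
  apply Finset.sum_congr rfl
  intro i _
  conv_rhs => rw [Finset.sum_comm]
  apply Finset.sum_congr rfl
  intro j _
  rw [show a i * ee x i k * (b j * ee x j k) = a i * b j * (ee x i k * ee x j k) by ring,
    ee_mul x i j k n hk, Finset.mul_sum]
  apply Finset.sum_congr rfl
  intro l _; ring

lemma II_mul {x : ℚ} (hx : pd p 0 x) {n e e' : ℕ} {f g : ℕ → ℚ} (hf : II p x n e f) (hg : II p x n e' g) :
    II p x n (e+e') (fun k => f k * g k) := by
  obtain ⟨a, ha, hf⟩ := hf
  obtain ⟨b, hb, hg⟩ := hg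
  refine ⟨fun l => ∑ i ∈ range n, ∑ j ∈ range n, a i * b j * cc x i j l, ?_, ?_⟩
  · intro l _
    apply pd_sum; intro i hi
    apply pd_sum; intro j hj
    exact pd_mul_right (pd_mul (ha i (by simpa using hi)) (hb j (by simpa using hj))) (cc_int hx _ _ _)
  · intro k hk
    simp only
    rw [hf k hk, hg k hk, ee_conv x n a b k hk]

lemma II_sum {x : ℚ} (hx : pd p 0 x) {n e s N : ℕ} {f : ℕ → ℚ} (hf : II p x n e f) (hN : N ≤ n)
    (hs : pd p s ((N:ℚ) + x - 1)) : pd p (s+e) (∑ k ∈ range N, (2*(k:ℚ)+x) * f k) := by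
  obtain ⟨a, ha, hf⟩ := hf
  have : ∑ k ∈ range N, (2*(k:ℚ)+x) * f k = ∑ j ∈ range n, a j * ∑ k ∈ range N, (2*(k:ℚ)+x) * ee x j k := by
    simp_rw [Finset.mul_sum]
    rw [Finset.sum_comm]
    apply Finset.sum_congr rfl
    intro k hk
    rw [hf k (by simp at hk; omega), Finset.mul_sum]
    apply Finset.sum_congr rfl
    intro j _; ring
  rw [this]
  apply pd_sum
  intro j hj
  rw [sum_ee, add_comm s e]
  exact pd_mul (ha j (by simpa using hj)) (pd_mul_left (pd_nat _)
    (pd_mul_right hs (poch_int (pd_add (pd_nat _) hx) _)))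

lemma Q_eq (t : ℚ) (k : ℕ) : poch (1-t) k * poch (1+t) k / (k.factorial:ℚ)^2 =
    ∏ i ∈ range k, (1 - t^2/((i:ℚ)+1)^2) := by
  rw [← poch_one]
  simp only [poch]
  rw [← Finset.prod_mul_distrib, ← Finset.prod_pow, ← Finset.prod_div_distrib]
  apply Finset.prod_congr rfl
  intro i _
  have : (1:ℚ) + i ≠ 0 := by positivity
  rw [add_comm (i:ℚ) 1]
  field_simp; ring

lemma P_eq (x t : ℚ) (k : ℕ) (hx : ∀ i : ℕ, x + i ≠ 0) : poch (x+t) k * poch (x-t) k / (poch x k)^2 =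
    ∏ i ∈ range k, (1 - t^2/(x+i)^2) := by
  simp only [poch]
  rw [← Finset.prod_mul_distrib, ← Finset.prod_pow, ← Finset.prod_div_distrib]
  apply Finset.prod_congr rfl
  intro i _
  have := hx i
  field_simp; ring

lemma Q_term {s i : ℕ} {t : ℚ} (ht : pd p s t) (hi : i + 1 < p^s) : pd p 2 (t^2/((i:ℚ)+1)^2) := by
  rw [← div_pow]
  have := pd_div_nat (i := i+1) ht (by omega) hi
  push_cast at this
  exact pd_pow this 2

lemma Q_unit {s k : ℕ} {t : ℚ} (ht : pd p s t) (h : k < p^s) :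
    pd p 2 (poch (1-t) k * poch (1+t) k / (k.factorial:ℚ)^2 - 1) := by
  rw [Q_eq]
  apply pd_prod1
  intro i hi
  exact Q_term ht (by simp at hi; omega)

lemma rem_coef {s j : ℕ} {x t : ℚ} (hx : pd p 0 x) (ht : pd p s t) (h : j < p^s) {e : ℕ}
    (hc : pd p e (poch (1-x) j / (j.factorial:ℚ))) :
    pd p (e+2) ((-1)^j * (j.factorial * poch (1-x) j / (poch 1 j * poch 1 j)) -
      (-1)^j * (j.factorial * poch (1-x) j / (poch (1-t) j * poch (1+t) j))) := by
  have h0 : (j.factorial : ℚ) ≠ 0 := by positivity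
  have : (-1)^j * (j.factorial * poch (1-x) j / (poch 1 j * poch 1 j)) -
      (-1)^j * (j.factorial * poch (1-x) j / (poch (1-t) j * poch (1+t) j)) =
      (poch (1-x) j / (j.factorial:ℚ)) * ((-1)^j * -(1/(poch (1-t) j * poch (1+t) j / (j.factorial:ℚ)^2) - 1)) := by
    rw [poch_one, one_div_div]
    field_simp
    ring
  rw [this]
  exact pd_mul hc (pd_mul_left (pd_pow_neg_one j) (pd_neg (pd_inv_unit (by norm_num) (Q_unit ht h))))

lemma gcoef {n m : ℕ} {x : ℚ} (hx : pd p 0 x) (hm2 : 2 * n < 3*m + 2) (a : ℕ → ℚ)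
    (h2 : ∀ j < n, pd p 2 (a j)) (h3 : ∀ j < n, n - m ≤ j → pd p 3 (a j)) :
    pd p 5 (∑ i ∈ range n, ∑ j ∈ range n, a i * a j * cc x i j m) := by
  apply pd_sum; intro i hi
  apply pd_sum; intro j hj
  have hi' : i < n := by simpa using hi
  have hj' : j < n := by simpa using hj
  by_cases hij : m ≤ i + j
  · rcases (by omega : n - m ≤ i ∨ n - m ≤ j) with h | h
    · have := pd_mul (h3 i hi' h) (h2 j hj')
      norm_num only at this
      exact pd_mul_right this (cc_int hx _ _ _)
    · have := pd_mul (h2 i hi') (h3 j hj' h)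
      norm_num only at this
      exact pd_mul_right this (cc_int hx _ _ _)
  · unfold cc
    rw [if_neg hij, mul_zero]; exact pd_zero _

set_option maxHeartbeats 1000000 in
lemma remainder {s m : ℕ} {x t : ℚ} (htm : x + m = t) (hxn : ∀ z : ℤ, x + z ≠ 0)
    (hx : pd p 0 x) (ht : pd p s t) (hm : m < p^s) (hm2 : 2 * p^s < 3*m + 2) :
    pd p (s+5) (∑ k ∈ range (m+1), (2*(k:ℚ)+x) * ((poch x k^2/(k.factorial:ℚ)^2) *
      (poch x k^2/(k.factorial:ℚ)^2 - ph x t k)^2)) := by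
  set n := p^s with hn
  have ht1 : ∀ j : ℕ, 1 - t + j ≠ 0 := fun j h => hxn (m-1-j) (by push_cast at htm ⊢; linarith)
  have ht2 : ∀ j : ℕ, 1 + t + j ≠ 0 := fun j h => hxn (m+1+j) (by push_cast at htm ⊢; linarith)
  have ho : ∀ j : ℕ, (1:ℚ) + j ≠ 0 := fun j => by positivity
  set A : ℕ → ℚ := fun k => poch x k^2/(k.factorial:ℚ)^2 with hA
  set v : ℕ → ℚ := fun k => poch x k * poch (x-t) k/((k.factorial:ℚ) * poch (1+t) k) with hv
  set cA : ℕ → ℚ := fun j => (-1)^j * (j.factorial * poch (1-x) j / (poch 1 j * poch 1 j)) with hcA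
  set cC : ℕ → ℚ := fun j => (-1)^j * (j.factorial * poch (1-x) j / (poch (1-t) j * poch (1+t) j)) with hcC
  set cv : ℕ → ℚ := fun j => (-1)^j * (j.factorial * poch (1+t-x) j / (poch 1 j * poch (1+t) j)) with hcv
  have eA : ∀ k < n, A k = ∑ j ∈ range n, cA j * ee x j k := by
    intro k hk
    have := saal x (1-x) 1 1 (by ring) k n hk ho ho
    rw [show 1 - (1-x) = x by ring, show 1 + x - 1 = x by ring] at this
    simp only [hA, hcA]
    rw [show poch x k^2/(k.factorial:ℚ)^2 = poch x k * poch x k / (poch 1 k * poch 1 k) by rw [poch_one]; ring, ← this]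
    apply Finset.sum_congr rfl
    intro j _; ring
  have eC : ∀ k < n, ph x t k = ∑ j ∈ range n, cC j * ee x j k := by
    intro k hk
    have := saal x (1-x) (1-t) (1+t) (by ring) k n hk ht1 ht2
    rw [show 1 - t - (1-x) = x - t by ring, show 1 + x - (1-t) = x + t by ring] at this
    simp only [hcC, ph]
    rw [mul_comm (poch (x+t) k), ← this]
    apply Finset.sum_congr rfl
    intro j _; ring
  have ev : ∀ k < n, v k = ∑ j ∈ range n, cv j * ee x j k := by
    intro k hk
    have := saal x (1+t-x) 1 (1+t) (by ring) k n hk ho ht2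
    rw [show 1 - (1+t-x) = x - t by ring, show 1 + x - 1 = x by ring] at this
    simp only [hcv, hv]
    rw [mul_comm (poch x k), ← poch_one, ← this]
    apply Finset.sum_congr rfl
    intro j _; ring
  have hx1 : pd p 0 (1-x) := pd_sub pd_one hx
  have hψ : ∀ k < n, A k - ph x t k = ∑ j ∈ range n, (cA j - cC j) * ee x j k := by
    intro k hk
    rw [eA k hk, eC k hk, ← Finset.sum_sub_distrib]
    apply Finset.sum_congr rfl
    intro j _; ring
  have hψ2 : ∀ j < n, pd p 2 (cA j - cC j) := by
    intro j hj
    have := rem_coef (e := 0) hx ht hj (poch_int hx1 j)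
    simpa using this
  have hψ3 : ∀ j < n, n - m ≤ j → pd p 3 (cA j - cC j) := by
    intro j hj hj2
    refine rem_coef (e := 1) hx ht hj (poch_div (i := n - m - 1) (s := s) ?_ (by omega) hj)
    have : 1 - x + ((n-m-1:ℕ):ℚ) = (p:ℚ)^s - t := by
      rw [← htm, Nat.cast_sub (by omega), Nat.cast_sub (by omega), hn]; push_cast; ring
    rw [this]
    exact pd_sub (pd_ppow s) ht
  have IIψ : II p x n 2 (fun k => A k - ph x t k) := ⟨_, hψ2, hψ⟩
  have IIAv : II p x n 1 (fun k => A k - v k) := by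
    refine ⟨fun j => cA j - cv j, ?_, ?_⟩
    · intro j hj
      have h0 : (j.factorial : ℚ) ≠ 0 := by positivity
      have n5 := poch_ne (1+t) j ht2
      have : cA j - cv j = (-1)^j * ((poch (1-x) j / (j.factorial:ℚ)) * (poch (1+t) j / j.factorial - 1) -
         (poch (1-x+t) j / (j.factorial:ℚ) - poch (1-x) j / (j.factorial:ℚ))) / (poch (1+t) j / j.factorial) := by
        simp only [hcA, hcv]
        rw [poch_one, show 1 + t - x = 1 - x + t by ring]
        field_simp
        ring
      simp only
      rw [this]
      have hu := poch_one_unit ht hj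
      exact pd_div_unit (pd_mul_left (pd_pow_neg_one j) (pd_sub (pd_mul_left (poch_int hx1 j) hu)
        (poch_lucas hx1 ht hj))) hu
    · intro k hk
      simp only
      rw [eA k hk, ev k hk, ← Finset.sum_sub_distrib]
      apply Finset.sum_congr rfl
      intro j _; ring
  have hN : pd p s (((m+1:ℕ):ℚ) + x - 1) := by
    rw [show ((m+1:ℕ):ℚ) + x - 1 = t by push_cast; linarith]; exact ht
  have R1 := II_sum hx (II_mul hx IIAv (II_mul hx IIψ IIψ)) (by omega : m + 1 ≤ n) hN
  have R2 : pd p (s+5) (∑ k ∈ range (m+1), (2*(k:ℚ)+x) * (v k * ((A k - ph x t k) * (A k - ph x t k)))) := by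
    set g : ℕ → ℚ := fun l => ∑ i ∈ range n, ∑ j ∈ range n, (cA i - cC i) * (cA j - cC j) * cc x i j l with hg
    have : ∑ k ∈ range (m+1), (2*(k:ℚ)+x) * (v k * ((A k - ph x t k) * (A k - ph x t k))) =
        ∑ l ∈ range n, g l * ∑ k ∈ range (m+1), ((2*(k:ℚ)+x) * v k) * ee x l k := by
      simp_rw [Finset.mul_sum]
      rw [Finset.sum_comm]
      apply Finset.sum_congr rfl
      intro k hk
      have hk' : k < n := by simp at hk; omega
      rw [hψ k hk', ee_conv x n _ _ k hk', Finset.mul_sum, Finset.mul_sum]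
      apply Finset.sum_congr rfl
      intro l _
      simp only [hg]
      ring
    rw [this, Finset.sum_eq_single m]
    · rw [add_comm s 5]
      apply pd_mul
      · exact gcoef hx hm2 _ hψ2 hψ3
      · rw [Finset.sum_range_succ, Finset.sum_eq_zero, zero_add]
        · have h0 : (m.factorial : ℚ) ≠ 0 := by positivity
          have n5 := poch_ne (1+t) m ht2
          have e1 : poch (x-t) m = (-1)^m * m.factorial := by
            rw [← poch_one, ← poch_rev, ← htm]; congr 1; ring
          have e2 : (t + m) * poch t m = t * poch (1+t) m := by
            rw [add_comm 1 t, ← poch_succ', poch_succ]; ring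
          have : (2*(m:ℚ)+x) * v m * ee x m m = t * ((-1)^m * (poch x m / m.factorial)) := by
            simp only [hv]
            rw [ee_eq, Nat.choose_self, e1, add_comm (m:ℚ) x, htm, show 2*(m:ℚ)+x = t + m by rw [← htm]; ring]
            generalize (-1:ℚ)^m = S
            push_cast
            field_simp
            linear_combination S * poch x m * e2
          rw [this]
          exact pd_mul_right ht (pd_mul_left (pd_pow_neg_one m) (poch_int hx m))
        · intro k hk
          rw [ee_big x m k (by simpa using hk), mul_zero]
    · intro l hl hlm
      rcases lt_or_gt_of_ne hlm with h | h
      · rw [orth x t m htm hxn l h, mul_zero]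
      · rw [Finset.sum_eq_zero, mul_zero]
        intro k hk
        rw [ee_big x l k (by simp at hk; omega), mul_zero]
    · intro h; simp at h; omega
  have := pd_add R1 R2
  convert this using 1
  rw [← Finset.sum_add_distrib]
  apply Finset.sum_congr rfl
  intro k _
  ring

end padic3

section padic4
variable {p : ℕ} [hp : Fact p.Prime]

lemma tail {s m N : ℕ} {x t : ℚ} (htm : x + m = t) (hxn : ∀ z : ℤ, x + z ≠ 0)
    (hx : pd p 0 x) (ht : pd p s t) (hN : m + 1 + N = p^s) :
    pd p (s+5) (∑ l ∈ range N, (2*((m+1+l:ℕ):ℚ)+x) * (poch x (m+1+l)^2/((m+1+l).factorial:ℚ)^2)^3) := by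
  have ht2 : ∀ j : ℕ, 1 + t + j ≠ 0 := fun j h => hxn (m+1+j) (by push_cast at htm ⊢; linarith)
  have hc : ∀ j : ℕ, (m:ℚ) + 2 + j ≠ 0 := fun j => by positivity
  set X : ℚ := m + 2 + t with hX
  have hX0 : pd p 0 X := pd_add (by have := pd_nat (p := p) (m+2); push_cast at this; exact this)
    (pd_mono (Nat.zero_le _) ht)
  set U : ℚ := poch x (m+1) / ((m+1).factorial:ℚ) with hU
  have hpl : ∀ l, poch x (m+1+l) = poch x (m+1) * poch (1+t) l := by
    intro l; rw [poch_add, show x + ((m+1:ℕ):ℚ) = 1 + t by push_cast; linarith]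
  have hfl : ∀ l, ((m+1+l).factorial:ℚ) = ((m+1).factorial:ℚ) * poch ((m:ℚ)+2) l := by
    intro l; rw [← poch_one, poch_add, poch_one]; congr 2; push_cast; ring
  have key : II p X N 2 (fun l => poch x (m+1+l)^2/((m+1+l).factorial:ℚ)^2) := by
    refine ⟨fun j => (-1)^j * (U^2 * (j.factorial * poch (1-x) j / (poch ((m:ℚ)+2) j * poch ((m:ℚ)+2) j))), ?_, ?_⟩
    · intro j hj
      have h0 : (j.factorial : ℚ) ≠ 0 := by positivity
      have h1 : ((m+1).factorial : ℚ) ≠ 0 := by positivity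
      have n5 := poch_ne (1+t) j ht2
      have n6 := poch_ne ((m:ℚ)+2) j hc
      have e : U^2 * (j.factorial * poch (1-x) j / (poch ((m:ℚ)+2) j * poch ((m:ℚ)+2) j)) =
        (poch (1-x) j / (j.factorial:ℚ)) * ((poch x (m+1+j)/((m+1+j).factorial:ℚ)) / (poch (1+t) j / j.factorial))^2 := by
        rw [hpl, hfl, hU]
        field_simp
      simp only
      rw [e]
      have h2 : pd p 1 ((poch x (m+1+j)/((m+1+j).factorial:ℚ)) / (poch (1+t) j / j.factorial)) := by
        apply pd_div_unit
        · exact poch_div (i := m) (s := s) (by rw [htm]; exact ht) (by omega) (by omega)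
        · exact poch_one_unit ht (by omega)
      have h3 := pd_pow h2 2
      norm_num only at h3
      exact pd_mul_left (pd_pow_neg_one j) (pd_mul_left (poch_int (pd_sub pd_one hx) j) h3)
    · intro l hl
      have h1 : ((m+1).factorial : ℚ) ≠ 0 := by positivity
      have n6 := poch_ne ((m:ℚ)+2) l hc
      have := saal X (1-x) ((m:ℚ)+2) ((m:ℚ)+2) (by rw [hX]; linarith) l N hl hc hc
      rw [show (m:ℚ) + 2 - (1-x) = 1 + t by linarith, show 1 + X - ((m:ℚ)+2) = 1 + t by rw [hX]; ring] at this
      have e : poch x (m+1+l)^2/((m+1+l).factorial:ℚ)^2 = U^2 * (poch (1+t) l * poch (1+t) l / (poch ((m:ℚ)+2) l * poch ((m:ℚ)+2) l)) := by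
        rw [hpl, hfl, hU]
        field_simp
      simp only
      rw [e, ← this, Finset.mul_sum]
      apply Finset.sum_congr rfl
      intro j _; ring
  have R := II_sum (s := s) hX0 (II_mul hX0 key (II_mul hX0 key key)) le_rfl (by
    rw [show (N:ℚ) + X - 1 = (p:ℚ)^s + t by
      rw [hX]
      have : ((m + 1 + N : ℕ):ℚ) = (p:ℚ)^s := by rw [hN]; push_cast; rfl
      push_cast at this
      linarith]
    exact pd_add (pd_ppow s) ht)
  have R2 := pd_mono (by omega : s + 5 ≤ s + (2 + (2 + 2))) R
  convert R2 using 1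
  apply Finset.sum_congr rfl
  intro l _
  rw [show 2*((m+1+l:ℕ):ℚ)+x = 2*(l:ℚ) + X by rw [hX]; push_cast; linarith]
  ring

lemma w_int {s m k : ℕ} {x t : ℚ} (htm : x + m = t) (h2x : ∀ z : ℤ, 2*x + z ≠ 0)
    (hx : pd p 0 x) (ht : pd p s t) (hm : m < p^s) (hm2 : 2 * p^s < 3*m + 2) (hk : k ≤ m) :
    pd p 1 (poch (2*x) m / m.factorial * (poch x k^3 * poch (1-x) k /
        ((k.factorial:ℚ)^3 * poch (2*x) k))) := by
  have hx1 : pd p 0 (1-x) := pd_sub pd_one hx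
  have h2x' : ∀ i : ℕ, 2*x + i ≠ 0 := fun i => by exact_mod_cast h2x i
  have h2xi : pd p 0 (2*x+k) := pd_add (pd_mul_left (by simpa using pd_nat (p := p) 2) hx) (pd_nat k)
  obtain ⟨j, rfl⟩ := Nat.exists_eq_add_of_le hk
  have hB0 : pd p 1 (poch (-((k+j:ℕ):ℚ) + t) k / poch (-((k+j:ℕ):ℚ)) k - 1) := by
    apply poch_ratio
    · intro i hi h
      have : ((k + j : ℕ):ℚ) = (i:ℕ) := by linarith
      have : k + j = i := by exact_mod_cast this
      omega
    · intro i hi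
      rw [show -((k+j:ℕ):ℚ) + i = -((k+j-i:ℕ):ℚ) by rw [Nat.cast_sub (by omega)]; ring]
      exact pd_div_not ht (not_pd_neg (not_pd_nat (by omega) (by omega)))
  have hB := pd_zero_of_unit hB0
  rw [show -((k+j:ℕ):ℚ) + t = x by linarith] at hB
  have E1 : ((k+j).factorial:ℚ) = (j.factorial:ℚ) * ((-1)^k * poch (-((k+j:ℕ):ℚ)) k) := by
    rw [← poch_rev, show 1 - -((k+j:ℕ):ℚ) - k = 1 + j by push_cast; ring, ← poch_one j, ← poch_add, poch_one,
      add_comm k j]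
  have n1 : poch (-((k+j:ℕ):ℚ)) k ≠ 0 := by
    intro h; rw [h] at E1; simp at E1; exact absurd E1 (by positivity)
  have n2 := poch_ne (2*x) k h2x'
  have h0 : (k.factorial : ℚ) ≠ 0 := by positivity
  have h1 : (j.factorial : ℚ) ≠ 0 := by positivity
  have s1 : ((-1:ℚ)^k) * ((-1)^k) = 1 := by rw [← mul_pow]; simp
  have n3 : (-1:ℚ)^k ≠ 0 := by positivity
  have e : poch (2*x) (k+j) / (k+j).factorial * (poch x k^3 * poch (1-x) k /
        ((k.factorial:ℚ)^3 * poch (2*x) k)) =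
      ((poch (1-x) k / (k.factorial:ℚ)) * (poch (2*x+k) j / (j.factorial:ℚ))) *
      ((poch x k / (k.factorial:ℚ))^2 * ((-1)^k * (poch x k / poch (-((k+j:ℕ):ℚ)) k))) := by
    rw [E1, poch_add]
    generalize (-1:ℚ)^k = S at *
    generalize poch (-((k+j:ℕ):ℚ)) k = G at *
    generalize poch (2*x) k = G2 at *
    field_simp
    rw [sq, s1]
    try ring
  rw [e]
  refine pd_mul_right ?_ (pd_mul_left (pd_pow0 (poch_int hx k) 2) (pd_mul_left (pd_pow_neg_one k) hB))
  rcases (by omega : p^s - (k+j) ≤ k ∨ k + p^s ≤ 2*(k+j)) with h | h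
  · refine pd_mul_right (poch_div (i := p^s - (k+j) - 1) (s := s) ?_ (by omega) (by omega)) (poch_int h2xi j)
    have : 1 - x + ((p^s-(k+j)-1:ℕ):ℚ) = (p:ℚ)^s - t := by
      rw [← htm, Nat.cast_sub (by omega), Nat.cast_sub (by omega)]; push_cast; ring
    rw [this]
    exact pd_sub (pd_ppow s) ht
  · refine pd_mul_left (poch_int hx1 k) (poch_div (i := k + 2*j - p^s) (s := s) ?_ (by omega) (by omega))
    have : 2*x + k + ((k+2*j-p^s:ℕ):ℚ) = t + t - (p:ℚ)^s := by
      rw [← htm, Nat.cast_sub (by omega)]; push_cast; ring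
    rw [this]
    exact pd_sub (pd_add ht ht) (pd_ppow s)

lemma PQ_lem {P Q Sa Sb : ℚ} (hP : pd p 4 (P - (1 - Sa))) (hQ : pd p 4 (Q - (1 - Sb)))
    (hP1 : pd p 2 (P - 1)) (hQ1 : pd p 2 (Q - 1)) :
    pd p 4 (P * (2 - 1/Q) - (1 - (Sa + Sb))) := by
  have hQu := pd_mono (by norm_num : 1 ≤ 2) hQ1
  have hQ0 := ne_zero_of_unit hQu
  have e : P * (2 - 1/Q) - (1 - (Sa + Sb)) = -(P * (((Q-1)*(Q-1)) / Q)) + ((P-1)*(Q-1) + ((P - (1 - Sa)) + (Q - (1 - Sb)))) := by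
    field_simp; ring
  rw [e]
  have h1 := pd_mul hQ1 hQ1
  have h2 := pd_mul hP1 hQ1
  norm_num only at h1 h2
  exact pd_add (pd_neg (pd_mul_left (pd_zero_of_unit hP1) (pd_div_unit h1 hQu))) (pd_add h2 (pd_add hP hQ))

lemma core {s m : ℕ} {x t : ℚ} (htm : x + m = t) (hxn : ∀ z : ℤ, x + z ≠ 0) (h2x : ∀ z : ℤ, 2*x + z ≠ 0)
    (hx : pd p 0 x) (ht : pd p s t) (hm : m < p^s) (hm2 : 2 * p^s < 3*m + 2) :
    pd p (s+5) (∑ k ∈ range (m+1), (2*(k:ℚ)+x) * (poch x k^2/(k.factorial:ℚ)^2)^3 -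
      t * ∑ k ∈ range (m+1), (poch (2*x) m / m.factorial * (poch x k^3 * poch (1-x) k /
        ((k.factorial:ℚ)^3 * poch (2*x) k))) *
        (1 - (∑ i ∈ range k, t^2/(x+i)^2 + ∑ i ∈ range k, t^2/((i:ℚ)+1)^2))) := by
  have hx' : ∀ i : ℕ, x + i ≠ 0 := fun i => by exact_mod_cast hxn i
  have ht1 : ∀ j : ℕ, 1 - t + j ≠ 0 := fun j h => hxn (m-1-j) (by push_cast at htm ⊢; linarith)
  have ht2 : ∀ j : ℕ, 1 + t + j ≠ 0 := fun j h => hxn (m+1+j) (by push_cast at htm ⊢; linarith)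
  have R := remainder htm hxn hx ht hm hm2
  have W0 := whip x t m htm hxn h2x 0 (fun i => by simp; positivity) (fun i => by simp; positivity)
  have Wt := whip x t m htm hxn h2x t ht1 ht2
  have D : pd p (s+5) (t * ∑ k ∈ range (m+1), (poch (2*x) m / m.factorial * (poch x k^3 * poch (1-x) k /
        ((k.factorial:ℚ)^3 * poch (2*x) k))) *
        ((poch (x+t) k * poch (x-t) k / poch x k^2) * (2 - 1/(poch (1-t) k * poch (1+t) k / (k.factorial:ℚ)^2))
         - (1 - (∑ i ∈ range k, t^2/(x+i)^2 + ∑ i ∈ range k, t^2/((i:ℚ)+1)^2)))) := by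
    apply pd_mul ht
    apply pd_sum
    intro k hk
    have hk' : k ≤ m := by simp at hk; omega
    have ha : ∀ i ∈ range k, pd p 2 (t^2/(x+i)^2) := by
      intro i hi
      have hi' : i < k := by simpa using hi
      rw [← div_pow]
      refine pd_pow (pd_div_not ht ?_) 2
      rw [show x + i = -((m-i:ℕ):ℚ) + t by rw [Nat.cast_sub (by omega)]; linarith]
      exact not_pd_add (not_pd_neg (not_pd_nat (by omega) (by omega))) ht
    have hb : ∀ i ∈ range k, pd p 2 (t^2/((i:ℚ)+1)^2) := by
      intro i hi
      exact Q_term ht (by simp at hi; omega)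
    have h1 := pd_prod _ _ ha
    have h2 := pd_prod _ _ hb
    have h3 := pd_prod1 _ _ ha
    have h4 := pd_prod1 _ _ hb
    norm_num only at h1 h2
    have h5 := PQ_lem h1 h2 h3 h4
    rw [P_eq x t k hx', Q_eq]
    have h6 := pd_mul (w_int htm h2x hx ht hm hm2 hk') h5
    norm_num only at h6
    exact h6
  have F := pd_add R D
  convert F using 1
  have E : ∑ k ∈ range (m+1), (2*(k:ℚ)+x) * (poch x k^2/(k.factorial:ℚ)^2)^3 =
     ∑ k ∈ range (m+1), (2*(k:ℚ)+x) * ((poch x k^2/(k.factorial:ℚ)^2) *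
      (poch x k^2/(k.factorial:ℚ)^2 - ph x t k)^2) +
     (2 * ∑ k ∈ range (m+1), (2*(k:ℚ)+x) * (poch x k^2/(k.factorial:ℚ)^2) * ph x t k * ph x 0 k -
     ∑ k ∈ range (m+1), (2*(k:ℚ)+x) * (poch x k^2/(k.factorial:ℚ)^2) * ph x t k * ph x t k) := by
    rw [Finset.mul_sum, ← Finset.sum_sub_distrib, ← Finset.sum_add_distrib]
    apply Finset.sum_congr rfl
    intro k _
    have : ph x 0 k = poch x k^2/(k.factorial:ℚ)^2 := by
      simp [ph, poch_one]; ring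
    rw [this]; ring
  rw [E, W0, Wt, add_sub_assoc]
  congr 1
  rw [Finset.mul_sum, Finset.mul_sum, Finset.mul_sum, Finset.mul_sum, Finset.mul_sum,
    ← Finset.sum_sub_distrib, ← Finset.sum_sub_distrib]
  apply Finset.sum_congr rfl
  intro k _
  have h0 : (k.factorial : ℚ) ≠ 0 := by positivity
  have hz : (k.factorial:ℚ)^2 / (poch (1-0) k * poch (1+0) k) = 1 := by
    simp only [sub_zero, add_zero, poch_one]; field_simp
  rw [hz, one_div_div]
  ring

end padic4

lemma pcong_of_pd {p e : ℕ} [hp : Fact p.Prime] {a b : ℚ} (h : pd p e (a - b)) : pcong p e a b := by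
  by_cases hab : a = b
  · exact Or.inl hab
  · right
    have h0 : a - b ≠ 0 := sub_ne_zero.mpr hab
    have hp1 : (1:ℚ) < p := by exact_mod_cast hp.out.one_lt
    unfold pd at h
    rw [padicNorm.eq_zpow_of_nonzero h0, zpow_le_zpow_iff_right₀ hp1] at h
    omega

theorem stmt15 (d s : ℕ) (hd : 0 < d) (hs : 0 < s) (p : ℕ) (hp : p.Prime) (hodd : Odd p)
    (r : ℤ) (hr : r = 1 ∨ r = -1)
    (hrd : (d : ℤ) ≤ (p : ℤ) ^ s + r) (hd3 : 3 ≤ d)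
    (hgcd : Nat.gcd p d = 1) (hmod : ((p : ℤ) ^ s) ≡ -r [ZMOD (d : ℤ)])
    (m₀ : ℕ) (hm₀ : (m₀ : ℤ) * d = (d : ℤ) * p ^ s - p ^ s - r)
    (m : ℕ) (hm : m = m₀ ∨ m = p ^ s - 1) :
    pcong p (s + 5)
      (∑ k ∈ Finset.range (m + 1),
        ((2 * d * k : ℚ) + r) * poch ((r : ℚ) / d) k ^ 6 / (k.factorial : ℚ) ^ 6)
      ((poch (2 * (r : ℚ) / d) m₀ / poch 1 m₀) *
        ∑ k ∈ Finset.range (m₀ + 1),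
          (poch ((r : ℚ) / d) k ^ 3 * poch (1 - (r : ℚ) / d) k /
            ((k.factorial : ℚ) ^ 3 * poch (2 * (r : ℚ) / d) k)) *
          (((d : ℚ) - 1) * (p : ℚ) ^ s - ((d : ℚ) - 1) ^ 3 * (p : ℚ) ^ (3 * s) *
            ∑ j ∈ Finset.Icc 1 k,
              (1 / ((d : ℚ) * j) ^ 2 + 1 / ((d : ℚ) * j - d + r) ^ 2))) := by
  haveI : Fact p.Prime := ⟨hp⟩
  have hdq : (d:ℚ) ≠ 0 := by positivity
  have hpd : pd p 0 (1/(d:ℚ)) := by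
    have : padicNorm p (d:ℚ) = 1 := by
      rw [padicNorm.nat_eq_one_iff]
      intro h
      have := (Nat.coprime_iff_gcd_eq_one.mpr hgcd)
      exact (hp.coprime_iff_not_dvd.mp this) h
    unfold pd
    rw [padicNorm.div, this]; simp
  set x : ℚ := (r:ℚ)/d with hxdef
  set t : ℚ := ((d:ℚ)-1) * (p:ℚ)^s / d with htdef
  have hm₀q : (m₀:ℚ) * d = d * (p:ℚ)^s - (p:ℚ)^s - r := by exact_mod_cast hm₀
  have htm : x + m₀ = t := by
    rw [hxdef, htdef]; field_simp; linarith
  have hdr : ∀ z : ℤ, (r:ℚ) ≠ z * d := by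
    intro z h
    have h' : r = z * d := by exact_mod_cast h
    have h2 : (d:ℤ) ∣ r := ⟨z, by rw [h']; ring⟩
    have h3 : (d:ℤ) ∣ 1 := by
      rcases hr with rfl | rfl
      · exact h2
      · simpa using h2
    have := Int.le_of_dvd (by norm_num) h3
    omega
  have hdr2 : ∀ z : ℤ, 2 * (r:ℚ) ≠ z * d := by
    intro z h
    have h' : 2 * r = z * d := by exact_mod_cast h
    have h2 : (d:ℤ) ∣ 2 * r := ⟨z, by rw [h']; ring⟩
    have h3 : (d:ℤ) ∣ 2 := by
      rcases hr with rfl | rfl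
      · simpa using h2
      · simpa using h2
    have := Int.le_of_dvd (by norm_num) h3
    omega
  have hxn : ∀ z : ℤ, x + z ≠ 0 := by
    intro z h
    apply hdr (-z)
    rw [hxdef] at h
    field_simp at h
    push_cast; linarith
  have h2x : ∀ z : ℤ, 2*x + z ≠ 0 := by
    intro z h
    apply hdr2 (-z)
    rw [hxdef] at h
    field_simp at h
    push_cast; linarith
  have hx : pd p 0 x := by
    rw [hxdef, div_eq_mul_one_div]
    exact pd_mul_left (pd_int r) hpd
  have ht : pd p s t := by
    rw [htdef, show ((d:ℚ)-1) * (p:ℚ)^s / d = (p:ℚ)^s * (((d:ℚ)-1) * (1/d)) by ring]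
    exact pd_mul_right (pd_ppow s) (pd_mul_left (pd_sub (pd_nat d) pd_one) hpd)
  have hdz : (0:ℤ) < d := by exact_mod_cast hd
  have hmlt : m₀ < p^s := by
    have : (m₀:ℤ) < (p:ℤ)^s := by nlinarith
    exact_mod_cast this
  have hm2 : 2 * p^s < 3*m₀ + 2 := by
    have h3 : (3:ℤ) ≤ d := by exact_mod_cast hd3
    have hp0 : (0:ℤ) ≤ (p:ℤ)^s := by positivity
    have hr1 : r ≤ 1 := by rcases hr with rfl | rfl <;> norm_num
    have : 2 * (p:ℤ)^s < 3*(m₀:ℤ) + 2 := by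
      by_contra hcon
      push Not at hcon
      have h4 := mul_le_mul_of_nonneg_right hcon hdz.le
      nlinarith [mul_nonneg hp0 (sub_nonneg.mpr h3)]
    exact_mod_cast this
  have C := core htm hxn h2x hx ht hmlt hm2
  have C2 : pd p (s+5) (∑ k ∈ range (m+1), (2*(k:ℚ)+x) * (poch x k^2/(k.factorial:ℚ)^2)^3 -
      t * ∑ k ∈ range (m₀+1), (poch (2*x) m₀ / m₀.factorial * (poch x k^3 * poch (1-x) k /
        ((k.factorial:ℚ)^3 * poch (2*x) k))) *
        (1 - (∑ i ∈ range k, t^2/(x+i)^2 + ∑ i ∈ range k, t^2/((i:ℚ)+1)^2))) := by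
    rcases hm with rfl | hm
    · exact C
    · obtain ⟨N, hN⟩ := Nat.exists_eq_add_of_le (by omega : m₀ + 1 ≤ p^s)
      have T := tail htm hxn hx ht hN.symm
      rw [show m + 1 = m₀ + 1 + N by omega, Finset.sum_range_add, add_sub_right_comm]
      exact pd_add C T
  apply pcong_of_pd
  have C3 := pd_mul_left (pd_nat (p := p) d) C2
  convert C3 using 1
  rw [mul_sub]
  congr 1
  · rw [Finset.mul_sum]
    apply Finset.sum_congr rfl
    intro k _
    rw [show (2 * d * k : ℚ) + r = d * (2*(k:ℚ)+x) by rw [hxdef]; field_simp]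
    ring
  · rw [poch_one, show 2 * (r:ℚ)/d = 2*x by rw [hxdef]; ring, Finset.mul_sum, Finset.mul_sum, Finset.mul_sum]
    apply Finset.sum_congr rfl
    intro k _
    have e1 : ((d:ℚ)-1) * (p:ℚ)^s = d * t := by rw [htdef]; field_simp
    have e2 : ((d:ℚ)-1)^3 * (p:ℚ)^(3*s) = (d * t)^3 := by
      rw [← e1, mul_pow, ← pow_mul, mul_comm s 3]
    have e3 : ∑ j ∈ Finset.Icc 1 k, (1 / ((d : ℚ) * j) ^ 2 + 1 / ((d : ℚ) * j - d + r) ^ 2) =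
        ∑ i ∈ range k, (1 / ((d:ℚ) * ((i:ℚ)+1))^2 + 1 / ((d:ℚ) * (x + i))^2) := by
      rw [← Finset.Ico_add_one_right_eq_Icc, Finset.sum_Ico_eq_sum_range]
      apply Finset.sum_congr rfl
      intro i _
      have : (d:ℚ) * x = r := by rw [hxdef]; field_simp
      push_cast
      rw [show (d:ℚ) * (1 + i) - d + r = d * (x + i) by rw [mul_add (d:ℚ) x, this]; ring, add_comm (1:ℚ)]
    rw [e1, e2, e3]
    have e4 : (d:ℚ)^2 * t^2 * ∑ i ∈ range k, (1 / ((d:ℚ) * ((i:ℚ)+1))^2 + 1 / ((d:ℚ) * (x + i))^2) =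
        ∑ i ∈ range k, t^2/(x+i)^2 + ∑ i ∈ range k, t^2/((i:ℚ)+1)^2 := by
      rw [← Finset.sum_add_distrib, Finset.mul_sum]
      apply Finset.sum_congr rfl
      intro i _
      have h1 : x + i ≠ 0 := by exact_mod_cast hxn i
      have h2 : (i:ℚ) + 1 ≠ 0 := by positivity
      field_simp
      ring
    rw [← e4]
    ring
end

section
/- Let n be a positive integer with n ≡ 3 (mod 4). Then, modulo [n]*Phi_n(q)^4, - [n]^3 * (q^{1-n} / (1+q)^2) * ((q^4;q^4)_{(n-3)/4}^2 / (q^6;q^4)_{(n-3)/4}^2) ≡ [n]^2 q^{(1-n)/2} * ((q^3;q^4)_{(n-1)/2} / (q^5;q^4)_{(n-1)/2}). -/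
open Finset

/-- The generator `q` of the field `ℚ(q)` of rational functions. -/
noncomputable def q : RatFunc ℚ := RatFunc.X

/-- The `q`-integer `[r] = (1 - q^r)/(1 - q)`. -/
noncomputable def qint (r : ℤ) : RatFunc ℚ := (1 - q ^ r) / (1 - q)

/-- The `q`-shifted factorial `(x; b)_m = (1-x)(1-xb)⋯(1-x b^(m-1))`. -/
noncomputable def qpoch (x b : RatFunc ℚ) (m : ℕ) : RatFunc ℚ :=
  ∏ i ∈ Finset.range m, (1 - x * b ^ i)

/-- `f ≡ g (mod P)`: `f - g = P * (r/s)` with `s` coprime to `P`. -/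
def qcong (f g : RatFunc ℚ) (P : Polynomial ℚ) : Prop :=
  ∃ r s : Polynomial ℚ, IsCoprime s P ∧
    f - g = algebraMap (Polynomial ℚ) (RatFunc ℚ) P *
      (algebraMap (Polynomial ℚ) (RatFunc ℚ) r / algebraMap (Polynomial ℚ) (RatFunc ℚ) s)

open Polynomial in
/-- exact order `k` of `p` at `π`. -/
def Ex18 (π : Polynomial ℚ) (k : ℕ) (p : Polynomial ℚ) : Prop := ∃ u, p = π ^ k * u ∧ ¬ π ∣ u

lemma Ex18.mul {π p r : Polynomial ℚ} {k l : ℕ} (hπ : Prime π) (h1 : Ex18 π k p)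
    (h2 : Ex18 π l r) : Ex18 π (k + l) (p * r) := by
  obtain ⟨u, rfl, hu⟩ := h1
  obtain ⟨v, rfl, hv⟩ := h2
  refine ⟨u * v, by ring, fun h => ?_⟩
  rcases hπ.dvd_or_dvd h with h | h
  exacts [hu h, hv h]

lemma Ex18.dvd {π p : Polynomial ℚ} {k : ℕ} (h1 : Ex18 π k p) : π ^ k ∣ p := by
  obtain ⟨u, rfl, hu⟩ := h1
  exact Dvd.intro _ rfl

lemma cyc_prime {d : ℕ} (hd : 0 < d) : Prime (Polynomial.cyclotomic d ℚ) :=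
  (Polynomial.cyclotomic.irreducible_rat hd).prime

open Polynomial in
lemma cyc_not_dvd {d a : ℕ} (hd : 0 < d) (ha : 0 < a) (h : ¬ d ∣ a) :
    ¬ cyclotomic d ℚ ∣ 1 - X ^ a := by
  intro h1
  have h2 : cyclotomic d ℚ ∣ X ^ a - 1 := by
    rw [← neg_sub]; exact (dvd_neg).2 h1
  rw [← prod_cyclotomic_eq_X_pow_sub_one ha] at h2
  obtain ⟨e, he, h3⟩ := ((cyc_prime hd).dvd_finsetProd_iff _).1 h2
  have hne : d ≠ e := by
    rintro rfl
    exact h (Nat.dvd_of_mem_divisors he)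
  have hc := cyclotomic.isCoprime_rat hne
  exact (cyc_prime hd).not_isUnit (hc.isUnit_of_dvd' dvd_rfl h3)

open Polynomial in
lemma cyc_dvd {d a : ℕ} (h : d ∣ a) : cyclotomic d ℚ ∣ 1 - X ^ a := by
  rw [← neg_sub]
  refine (dvd_neg).2 ((cyclotomic.dvd_X_pow_sub_one d ℚ).trans ?_)
  obtain ⟨c, rfl⟩ := h
  rw [pow_mul]
  exact sub_one_dvd_pow_sub_one _ _

open Polynomial in
lemma cyc_ex {d a : ℕ} (hd : 0 < d) (ha : 0 < a) :
    Ex18 (cyclotomic d ℚ) (if d ∣ a then 1 else 0) (1 - X ^ a) := by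
  split_ifs with h
  · obtain ⟨u, hu⟩ := cyc_dvd h
    refine ⟨u, by rw [pow_one, hu], ?_⟩
    rintro ⟨v, rfl⟩
    have hs : Squarefree (X ^ a - 1 : ℚ[X]) := by
      apply Separable.squarefree
      rw [X_pow_sub_one_separable_iff]
      exact_mod_cast ha.ne'
    refine (cyc_prime hd).not_isUnit (hs _ ⟨-v, ?_⟩)
    linear_combination -hu
  · exact ⟨_, by simp, cyc_not_dvd hd ha h⟩

open Polynomial in
lemma cyc_ex_prod {d : ℕ} (hd : 0 < d) (s : Finset ℕ) (a : ℕ → ℕ) (ha : ∀ i ∈ s, 0 < a i) :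
    Ex18 (cyclotomic d ℚ) (#{i ∈ s | d ∣ a i}) (∏ i ∈ s, (1 - X ^ a i)) := by
  rw [Finset.card_filter]
  induction s using Finset.induction_on with
  | empty => exact ⟨1, by simp, (cyc_prime hd).not_dvd_one⟩
  | insert i s hi ih =>
    rw [Finset.sum_insert hi, Finset.prod_insert hi]
    exact Ex18.mul (cyc_prime hd) (cyc_ex hd (ha i (by simp)))
      (ih fun j hj => ha j (by simp [hj]))

lemma num_dvd {π A B : Polynomial ℚ} {f : RatFunc ℚ} (hπ : Prime π) {a b k : ℕ}
    (hB : Ex18 π b B) (hA : π ^ a ∣ A) (hab : b + k ≤ a)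
    (hf : f = algebraMap (Polynomial ℚ) (RatFunc ℚ) A / algebraMap (Polynomial ℚ) (RatFunc ℚ) B) :
    π ^ k ∣ f.num := by
  have hB0 : B ≠ 0 := by
    rintro rfl
    obtain ⟨u, hu, hu'⟩ := hB
    have := (mul_eq_zero.1 hu.symm).resolve_left (pow_ne_zero _ hπ.ne_zero)
    exact hu' (this ▸ dvd_zero _)
  have key : f.num * B = A * f.denom := by
    have hB1 : algebraMap (Polynomial ℚ) (RatFunc ℚ) B ≠ 0 := by
      simpa using hB0
    have hd1 : algebraMap (Polynomial ℚ) (RatFunc ℚ) f.denom ≠ 0 := by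
      simpa using f.denom_ne_zero
    have h := (RatFunc.num_div_denom f).trans hf
    rw [div_eq_div_iff hd1 hB1, ← map_mul, ← map_mul] at h
    exact RatFunc.algebraMap_injective ℚ h
  obtain ⟨u, rfl, hu⟩ := hB
  have h1 : π ^ (b + k) ∣ f.num * (π ^ b * u) := by
    rw [key]
    exact ((pow_dvd_pow _ hab).trans hA).mul_right _
  have h2 : π ^ b * π ^ k ∣ π ^ b * (f.num * u) := by
    rw [← pow_add]; convert h1 using 1; ring
  have h3 := (mul_dvd_mul_iff_left (pow_ne_zero b hπ.ne_zero)).1 h2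
  exact hπ.pow_dvd_of_dvd_mul_right _ hu h3

open Polynomial in
lemma assemble {n : ℕ} (hn : 1 < n) (f : RatFunc ℚ)
    (h1 : ∀ d, d ∣ n → 1 < d → cyclotomic d ℚ ∣ f.num)
    (h5 : cyclotomic n ℚ ^ 5 ∣ f.num) :
    ∃ r s : Polynomial ℚ,
      IsCoprime s ((∑ i ∈ Finset.range n, Polynomial.X ^ i) * Polynomial.cyclotomic n ℚ ^ 4) ∧
      f = algebraMap (Polynomial ℚ) (RatFunc ℚ)
        ((∑ i ∈ Finset.range n, Polynomial.X ^ i) * Polynomial.cyclotomic n ℚ ^ 4) *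
      (algebraMap (Polynomial ℚ) (RatFunc ℚ) r / algebraMap (Polynomial ℚ) (RatFunc ℚ) s) := by
  have hP : ((∑ i ∈ Finset.range n, Polynomial.X ^ i) * Polynomial.cyclotomic n ℚ ^ 4)
      = cyclotomic n ℚ ^ 5 * ∏ d ∈ (n.divisors.erase 1).erase n, cyclotomic d ℚ := by
    rw [← prod_cyclotomic_eq_geom_sum (by omega), ← Finset.mul_prod_erase _ _
      (show n ∈ n.divisors.erase 1 by simp; try omega)]
    ring
  have hmem : ∀ d ∈ (n.divisors.erase 1).erase n, d ∣ n ∧ 1 < d ∧ d ≠ n := by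
    intro d hd
    simp only [Finset.mem_erase, Nat.mem_divisors] at hd
    have : d ≠ 0 := by rintro rfl; simp at hd
    exact ⟨hd.2.2.1, by omega, hd.1⟩
  have hdvd : ((∑ i ∈ Finset.range n, Polynomial.X ^ i) * Polynomial.cyclotomic n ℚ ^ 4)
      ∣ f.num := by
    rw [hP]
    apply IsCoprime.mul_dvd
    · apply IsCoprime.prod_right
      intro d hd
      exact (cyclotomic.isCoprime_rat (hmem d hd).2.2.symm).pow_left
    · exact h5
    · apply Finset.prod_dvd_of_coprime
      · intro a _ b _ hab
        exact cyclotomic.isCoprime_rat hab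
      · intro d hd
        exact h1 d (hmem d hd).1 (hmem d hd).2.1
  obtain ⟨r, hr⟩ := hdvd
  refine ⟨r, f.denom, ?_, ?_⟩
  · exact ((RatFunc.isCoprime_num_denom f).of_isCoprime_of_dvd_left ⟨r, hr⟩).symm
  · rw [← mul_div_assoc, ← map_mul, ← hr, RatFunc.num_div_denom]

open Polynomial in
/-- poly -/
noncomputable def E18 (m : ℕ) : ℚ[X] := ∏ j ∈ range m, (1 - X ^ (4 * (j + 1)))
open Polynomial in
/-- poly -/
noncomputable def F18 (m : ℕ) : ℚ[X] := ∏ j ∈ range (m + 1), (1 - X ^ (4 * j + 2))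
open Polynomial in
/-- poly -/
noncomputable def N18 (m : ℕ) : ℚ[X] :=
  (∏ j ∈ range m, (1 - X ^ (4 * (m - 1 - j) + 3))) * ∏ j ∈ range m, (1 - X ^ (4 * m + 3 + 4 * (j + 1)))
open Polynomial in
/-- poly -/
noncomputable def D18 (m : ℕ) : ℚ[X] :=
  (∏ j ∈ range (m + 1), (1 - X ^ (4 * (m - j) + 1))) *
    ∏ j ∈ range (m + 1), (1 - X ^ (4 * m + 3 + (4 * j + 2)))

open Polynomial in
lemma prod_cong (s : Finset ℕ) (a b c : ℕ → ℕ) (n : ℕ) (h1 : ∀ j ∈ s, a j + c j = n)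
    (h2 : ∀ j ∈ s, b j = n + c j) :
    (1 - X ^ n : ℚ[X]) ^ 2 ∣
      (∏ j ∈ s, (1 - X ^ a j)) * (∏ j ∈ s, (1 - X ^ b j)) * (∏ j ∈ s, X ^ c j)
        - (-X ^ n) ^ #s * (∏ j ∈ s, (1 - X ^ c j)) ^ 2 := by
  induction s using Finset.induction_on with
  | empty => simp
  | insert i s hi ih =>
    obtain ⟨w, hw⟩ := ih (fun j hj => h1 j (by simp [hj])) (fun j hj => h2 j (by simp [hj]))
    simp only [Finset.prod_insert hi, Finset.card_insert_of_notMem hi]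
    have e1 : (X ^ n : ℚ[X]) = X ^ a i * X ^ c i := by rw [← pow_add, h1 i (by simp)]
    have e2 : (X ^ b i : ℚ[X]) = X ^ n * X ^ c i := by rw [← pow_add, h2 i (by simp)]
    rw [e2]
    have e3 : (1 - X ^ a i) * (1 - X ^ n * X ^ c i) * X ^ c i
        = -X ^ n * (1 - X ^ c i) ^ 2 + (1 - X ^ n : ℚ[X]) ^ 2 * X ^ c i := by
      linear_combination (1 - X ^ n * X ^ c i) * e1
    refine ⟨X ^ c i * ((∏ j ∈ s, (1 - X ^ a j)) * (∏ j ∈ s, (1 - X ^ b j)) * (∏ j ∈ s, X ^ c j))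
      + -X ^ n * (1 - X ^ c i) ^ 2 * w, ?_⟩
    linear_combination ((∏ j ∈ s, (1 - X ^ a j)) * (∏ j ∈ s, (1 - X ^ b j)) * (∏ j ∈ s, X ^ c j)) * e3
      + -X ^ n * (1 - X ^ c i) ^ 2 * hw

open Polynomial in
lemma QR (m : ℕ) : (∏ j ∈ range (m + 1), X ^ (4 * j + 2) : ℚ[X])
    = X ^ (2 * m + 2) * ∏ j ∈ range m, X ^ (4 * (j + 1)) := by
  induction m with
  | zero => simp
  | succ m ih => rw [Finset.prod_range_succ, ih, Finset.prod_range_succ]; ring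

open Polynomial in
lemma bracket (m : ℕ) : (1 - X ^ (4 * m + 3) : ℚ[X]) ^ 2 ∣
    (∏ j ∈ range (m + 1), X ^ (4 * j + 2)) *
      (E18 m ^ 2 * D18 m + X ^ (2 * m + 1) * N18 m * F18 m ^ 2) := by
  obtain ⟨u, hu⟩ := prod_cong (range m) (fun j => 4 * (m - 1 - j) + 3)
    (fun j => 4 * m + 3 + 4 * (j + 1)) (fun j => 4 * (j + 1)) (4 * m + 3)
    (by intro j hj; simp at hj; omega) (by intro j hj; omega)
  obtain ⟨v, hv⟩ := prod_cong (range (m + 1)) (fun j => 4 * (m - j) + 1)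
    (fun j => 4 * m + 3 + (4 * j + 2)) (fun j => 4 * j + 2) (4 * m + 3)
    (by intro j hj; simp at hj; omega) (by intro j hj; omega)
  rw [Finset.card_range] at hu hv
  change N18 m * _ - _ * E18 m ^ 2 = _ at hu
  change D18 m * _ - _ * F18 m ^ 2 = _ at hv
  have hQ := QR m
  generalize (∏ j ∈ range (m + 1), X ^ (4 * j + 2) : ℚ[X]) = Q at *
  generalize (∏ j ∈ range m, X ^ (4 * (j + 1)) : ℚ[X]) = R at *
  refine ⟨E18 m ^ 2 * v + X ^ (4 * m + 3) * F18 m ^ 2 * u, ?_⟩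
  linear_combination E18 m ^ 2 * hv + X ^ (4 * m + 3) * F18 m ^ 2 * hu
    + X ^ (2 * m + 1) * N18 m * F18 m ^ 2 * hQ

open Polynomial in
lemma not_dvd_X {d : ℕ} (hd : 0 < d) : ¬ cyclotomic d ℚ ∣ X := by
  intro h
  have h1 : cyclotomic d ℚ ∣ 1 - X ^ d := cyc_dvd dvd_rfl
  have h2 : cyclotomic d ℚ ∣ X ^ d := h.trans (dvd_pow_self _ hd.ne')
  have := dvd_add h1 h2
  rw [sub_add_cancel] at this
  exact (cyc_prime hd).not_dvd_one this

lemma count_le {d m : ℕ} (hd : d ∣ 4 * m + 3) :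
    #{j ∈ range (m + 1) | d ∣ 4 * j + 2} ≤ #{j ∈ range m | d ∣ 4 * (j + 1)} + 1 := by
  have hodd : d % 2 = 1 := by
    obtain ⟨c, hc⟩ := hd
    rcases Nat.mod_two_eq_zero_or_one d with h | h
    · have : (d * c) % 2 = 0 := by simp [Nat.mul_mod, h]
      omega
    · exact h
  have h1 : #{j ∈ range (m + 1) | d ∣ 4 * j} = #{j ∈ range m | d ∣ 4 * (j + 1)} + 1 := by
    rw [Finset.card_filter, Finset.card_filter, Finset.sum_range_succ']
    simp
  have hge : ∀ j, d ∣ 4 * j + 2 → d ≤ 2 * j + 1 := by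
    intro j hj
    have hc : Nat.Coprime d 2 := by
      rw [Nat.coprime_two_right]; exact Nat.odd_iff.2 hodd
    exact Nat.le_of_dvd (by omega) (hc.dvd_of_dvd_mul_left (by convert hj using 1; ring))
  rw [← h1]
  apply Finset.card_le_card_of_injOn (fun j => j - (d - 1) / 2)
  · intro j hj
    simp only [coe_filter, mem_range, Set.mem_ofPred_eq] at hj ⊢
    have := hge j hj.2
    refine ⟨by omega, ?_⟩
    have h3 : 4 * (j - (d - 1) / 2) = 4 * j + 2 - d * 2 := by omega
    rw [h3]
    exact Nat.dvd_sub hj.2 (Dvd.intro _ rfl)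
  · intro i hi j hj hij
    simp only [coe_filter, mem_range, Set.mem_ofPred_eq] at hi hj hij
    have := hge j hj.2
    have := hge i hi.2
    omega

lemma refl_count {d n a c : ℕ} (hd : d ∣ n) (h : a + c = n) : d ∣ a ↔ d ∣ c := by
  subst h
  constructor
  · intro h; exact (Nat.dvd_add_right h).1 hd
  · intro h; exact (Nat.dvd_add_left h).1 hd

open Polynomial in
lemma exF {d m : ℕ} (hd : 0 < d) :
    Ex18 (cyclotomic d ℚ) #{j ∈ range (m + 1) | d ∣ 4 * j + 2} (F18 m) :=
  cyc_ex_prod hd _ _ (by intros; omega)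

open Polynomial in
lemma exE {d m : ℕ} (hd : 0 < d) :
    Ex18 (cyclotomic d ℚ) #{j ∈ range m | d ∣ 4 * (j + 1)} (E18 m) :=
  cyc_ex_prod hd _ _ (by intros; omega)

open Polynomial in
lemma exD {d m : ℕ} (hd : 0 < d) (hdn : d ∣ 4 * m + 3) :
    Ex18 (cyclotomic d ℚ) (#{j ∈ range (m + 1) | d ∣ 4 * j + 2}
      + #{j ∈ range (m + 1) | d ∣ 4 * j + 2}) (D18 m) := by
  apply Ex18.mul (cyc_prime hd)
  · convert cyc_ex_prod hd (range (m + 1)) (fun j => 4 * (m - j) + 1) (by intros; omega) using 2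
    apply Finset.filter_congr
    intro j hj
    simp at hj
    exact (refl_count hdn (by omega)).symm
  · convert cyc_ex_prod hd (range (m + 1)) (fun j => 4 * m + 3 + (4 * j + 2))
      (by intros; omega) using 2
    apply Finset.filter_congr
    intro j hj
    exact (Nat.dvd_add_right hdn).symm

open Polynomial in
lemma exN {d m : ℕ} (hd : 0 < d) (hdn : d ∣ 4 * m + 3) :
    Ex18 (cyclotomic d ℚ) (#{j ∈ range m | d ∣ 4 * (j + 1)}
      + #{j ∈ range m | d ∣ 4 * (j + 1)}) (N18 m) := by
  apply Ex18.mul (cyc_prime hd)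
  · convert cyc_ex_prod hd (range m) (fun j => 4 * (m - 1 - j) + 3) (by intros; omega) using 2
    apply Finset.filter_congr
    intro j hj
    simp at hj
    exact (refl_count hdn (by omega)).symm
  · convert cyc_ex_prod hd (range m) (fun j => 4 * m + 3 + 4 * (j + 1))
      (by intros; omega) using 2
    apply Finset.filter_congr
    intro j hj
    exact (Nat.dvd_add_right hdn).symm

open Polynomial in
lemma exB {d m : ℕ} (hd : 1 < d) (hdn : d ∣ 4 * m + 3) :
    Ex18 (cyclotomic d ℚ) (4 * #{j ∈ range (m + 1) | d ∣ 4 * j + 2})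
      ((1 - X) * X ^ (4 * m + 2) * F18 m ^ 2 * D18 m) := by
  have hd0 : 0 < d := by omega
  have hp := cyc_prime hd0
  have h1 : Ex18 (cyclotomic d ℚ) 0 (1 - X) := by
    refine ⟨1 - X, by simp, ?_⟩
    have := cyc_not_dvd hd0 one_pos (fun h => by have := Nat.le_of_dvd one_pos h; omega)
    simpa using this
  have h2 : Ex18 (cyclotomic d ℚ) 0 (X ^ (4 * m + 2)) :=
    ⟨X ^ (4 * m + 2), by simp, fun h => not_dvd_X hd0 (hp.dvd_of_dvd_pow h)⟩
  have h3 := exF (m := m) hd0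
  have := Ex18.mul hp (Ex18.mul hp (Ex18.mul hp h1 h2) (Ex18.mul hp h3 h3)) (exD hd0 hdn)
  convert this using 1
  · ring
  · ring

/-- am -/
noncomputable abbrev am : Polynomial ℚ →+* RatFunc ℚ := algebraMap (Polynomial ℚ) (RatFunc ℚ)

lemma am_X : am Polynomial.X = q := RatFunc.algebraMap_X

lemma q1 {a : ℕ} (ha : 0 < a) : (1 - q ^ a : RatFunc ℚ) ≠ 0 := by
  have : (1 - q ^ a : RatFunc ℚ) = am (1 - Polynomial.X ^ a) := by
    rw [map_sub, map_one, map_pow, am_X]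
  rw [this]
  intro h
  have h2 := (map_eq_zero_iff am (RatFunc.algebraMap_injective ℚ)).1 h
  have := congrArg (Polynomial.eval 0) h2
  simp [ha.ne'] at this

lemma pE (m : ℕ) : qpoch (q ^ 4) (q ^ 4) m = am (E18 m) := by
  simp only [qpoch, E18, map_prod, map_sub, map_one, map_pow, am_X]
  exact Finset.prod_congr rfl fun i _ => by ring

lemma pF (m : ℕ) : qpoch (q ^ 6) (q ^ 4) m * (1 - q ^ 2) = am (F18 m) := by
  simp only [qpoch, F18, map_prod, map_sub, map_one, map_pow, am_X]
  rw [Finset.prod_range_succ']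
  congr 1
  exact Finset.prod_congr rfl fun i _ => by ring

lemma pN (m : ℕ) : qpoch (q ^ 3) (q ^ 4) (2 * m + 1) = (1 - q ^ (4 * m + 3)) * am (N18 m) := by
  simp only [qpoch, N18, map_mul, map_prod, map_sub, map_one, map_pow, am_X]
  rw [show 2 * m + 1 = m + (m + 1) by ring, Finset.prod_range_add, Finset.prod_range_succ',
    ← Finset.prod_range_reflect]
  have h1 : ∏ j ∈ range m, (1 - q ^ 3 * (q ^ 4) ^ (m - 1 - j))
      = ∏ j ∈ range m, (1 - q ^ (4 * (m - 1 - j) + 3)) :=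
    Finset.prod_congr rfl fun i _ => by ring
  have h2 : ∏ j ∈ range m, (1 - q ^ 3 * (q ^ 4) ^ (m + (j + 1)))
      = ∏ j ∈ range m, (1 - q ^ (4 * m + 3 + 4 * (j + 1))) :=
    Finset.prod_congr rfl fun i _ => by ring
  rw [h1, h2]
  ring

lemma pD (m : ℕ) : qpoch (q ^ 5) (q ^ 4) (2 * m + 1) * (1 - q) = am (D18 m) := by
  have h0 : qpoch (q ^ 5) (q ^ 4) (2 * m + 1) * (1 - q)
      = ∏ i ∈ range ((m + 1) + (m + 1)), (1 - q * (q ^ 4) ^ i) := by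
    rw [show m + 1 + (m + 1) = 2 * m + 1 + 1 by ring, Finset.prod_range_succ', qpoch]
    congr 1
    · exact Finset.prod_congr rfl fun i _ => by ring
    · simp
  rw [h0]
  simp only [D18, map_mul, map_prod, map_sub, map_one, map_pow, am_X]
  rw [Finset.prod_range_add, ← Finset.prod_range_reflect]
  congr 1
  · refine Finset.prod_congr rfl fun i _ => ?_
    rw [show m + 1 - 1 - i = m - i by omega]; ring
  · exact Finset.prod_congr rfl fun i _ => by ring

lemma main_eq (m : ℕ) :
    (-(((1 - q ^ (4 * m + 3)) / (1 - q)) ^ 3) * ((q ^ (4 * m + 2))⁻¹ / (1 + q) ^ 2) *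
        (qpoch (q ^ 4) (q ^ 4) m ^ 2 / qpoch (q ^ 6) (q ^ 4) m ^ 2)) -
      (((1 - q ^ (4 * m + 3)) / (1 - q)) ^ 2 * (q ^ (2 * m + 1))⁻¹ *
        (qpoch (q ^ 3) (q ^ 4) (2 * m + 1) / qpoch (q ^ 5) (q ^ 4) (2 * m + 1)))
    = am (-(1 - Polynomial.X ^ (4 * m + 3)) ^ 3 *
        (E18 m ^ 2 * D18 m + Polynomial.X ^ (2 * m + 1) * N18 m * F18 m ^ 2)) /
      am ((1 - Polynomial.X) * Polynomial.X ^ (4 * m + 2) * F18 m ^ 2 * D18 m) := by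
  have hq : q ≠ 0 := RatFunc.X_ne_zero
  have hq1 : 1 - q ≠ 0 := by simpa using q1 one_pos
  have hq2 : 1 - q ^ 2 ≠ 0 := q1 two_pos
  have hq3 : 1 + q ≠ 0 := by
    intro h
    apply hq2
    linear_combination (1 - q) * h
  have hF : qpoch (q ^ 6) (q ^ 4) m ≠ 0 := by
    apply Finset.prod_ne_zero_iff.2
    intro i _
    have := q1 (show 0 < 6 + 4 * i by omega)
    rwa [pow_add, pow_mul] at this
  have hD : qpoch (q ^ 5) (q ^ 4) (2 * m + 1) ≠ 0 := by
    apply Finset.prod_ne_zero_iff.2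
    intro i _
    have := q1 (show 0 < 5 + 4 * i by omega)
    rwa [pow_add, pow_mul] at this
  simp only [map_mul, map_neg, map_sub, map_add, map_pow, map_one, am_X]
  rw [← pE, ← pF, ← pD, pN]
  generalize am (N18 m) = N
  generalize qpoch (q ^ 6) (q ^ 4) m = F at *
  generalize qpoch (q ^ 5) (q ^ 4) (2 * m + 1) = D at *
  generalize qpoch (q ^ 4) (q ^ 4) m = E at *
  rw [show 1 - q ^ 2 = (1 - q) * (1 + q) by ring,
    show q ^ (4 * m + 2) = q ^ (2 * m + 1) * q ^ (2 * m + 1) by ring]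
  have hz : q ^ (2 * m + 1) ≠ 0 := pow_ne_zero _ hq
  generalize q ^ (2 * m + 1) = z at *
  generalize q ^ (4 * m + 3) = x at *
  generalize q = t at *
  field_simp
  ring

open Polynomial in
theorem stmt18_aux (m : ℕ) (f : RatFunc ℚ)
    (hf : f = am (-(1 - Polynomial.X ^ (4 * m + 3)) ^ 3 *
        (E18 m ^ 2 * D18 m + Polynomial.X ^ (2 * m + 1) * N18 m * F18 m ^ 2)) /
      am ((1 - Polynomial.X) * Polynomial.X ^ (4 * m + 2) * F18 m ^ 2 * D18 m)) :
    (∀ d, d ∣ 4 * m + 3 → 1 < d → cyclotomic d ℚ ∣ f.num) ∧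
    cyclotomic (4 * m + 3) ℚ ^ 5 ∣ f.num := by
  constructor
  · intro d hdn hd
    have hd0 : 0 < d := by omega
    have hp := cyc_prime hd0
    have hc := count_le hdn
    have hF := (exF (m := m) hd0).dvd
    have hE := (exE (m := m) hd0).dvd
    have hD := (exD hd0 hdn).dvd
    have hN := (exN hd0 hdn).dvd
    have hB := exB hd hdn
    have hx : cyclotomic d ℚ ∣ 1 - X ^ (4 * m + 3) := cyc_dvd hdn
    generalize #{j ∈ range (m + 1) | d ∣ 4 * j + 2} = c at *
    generalize #{j ∈ range m | d ∣ 4 * (j + 1)} = e at *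
    have := num_dvd (k := 1) (a := 3 + (2 * e + 2 * c)) hp hB ?_ (by omega) hf
    · simpa using this
    · rw [pow_add]
      apply mul_dvd_mul
      · exact (dvd_neg).2 (pow_dvd_pow_of_dvd hx 3)
      · apply dvd_add
        · have := mul_dvd_mul (pow_dvd_pow_of_dvd hE 2) hD
          convert this using 1
          ring
        · have := (mul_dvd_mul hN (pow_dvd_pow_of_dvd hF 2)).mul_left (X ^ (2 * m + 1))
          convert this using 1 <;> ring
  · have hd0 : 0 < 4 * m + 3 := by omega
    have hp := cyc_prime hd0
    have hB := exB (d := 4 * m + 3) (m := m) (by omega) dvd_rfl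
    have hx : cyclotomic (4 * m + 3) ℚ ∣ 1 - X ^ (4 * m + 3) := cyc_dvd dvd_rfl
    have hc : #{j ∈ range (m + 1) | 4 * m + 3 ∣ 4 * j + 2} = 0 := by
      rw [Finset.card_eq_zero, Finset.filter_eq_empty_iff]
      intro j hj h
      simp at hj
      have := Nat.le_of_dvd (by omega) h
      omega
    rw [hc] at hB
    refine num_dvd (k := 5) (a := 3 + 2) hp hB ?_ (by omega) hf
    rw [pow_add]
    apply mul_dvd_mul
    · exact (dvd_neg).2 (pow_dvd_pow_of_dvd hx 3)
    · have h1 := (pow_dvd_pow_of_dvd hx 2).trans (bracket m)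
      refine hp.pow_dvd_of_dvd_mul_left _ ?_ h1
      intro h
      obtain ⟨j, _, hj⟩ := (hp.dvd_finsetProd_iff _).1 h
      exact not_dvd_X hd0 (hp.dvd_of_dvd_pow hj)

theorem stmt18 (n : ℕ) (hpos : 0 < n) (hmod : n % 4 = 3) :
    qcong
      (-(qint n ^ 3) * (q ^ (1 - (n : ℤ)) / (1 + q) ^ 2) *
        (qpoch (q ^ 4) (q ^ 4) ((n - 3) / 4) ^ 2 /
          qpoch (q ^ 6) (q ^ 4) ((n - 3) / 4) ^ 2))
      (qint n ^ 2 * q ^ ((1 - (n : ℤ)) / 2) *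
        (qpoch (q ^ 3) (q ^ 4) ((n - 1) / 2) / qpoch (q ^ 5) (q ^ 4) ((n - 1) / 2)))
      ((∑ i ∈ Finset.range n, Polynomial.X ^ i) * Polynomial.cyclotomic n ℚ ^ 4) := by
  obtain ⟨m, rfl⟩ : ∃ m, n = 4 * m + 3 := ⟨n / 4, by omega⟩
  have e1 : (4 * m + 3 - 3) / 4 = m := by omega
  have e2 : (4 * m + 3 - 1) / 2 = 2 * m + 1 := by omega
  have e3 : (1 - ((4 * m + 3 : ℕ) : ℤ)) = -((4 * m + 2 : ℕ) : ℤ) := by push_cast; ring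
  have e4 : (1 - ((4 * m + 3 : ℕ) : ℤ)) / 2 = -((2 * m + 1 : ℕ) : ℤ) := by omega
  have h := main_eq m
  rw [e4, e3, e1, e2]
  simp only [qint, zpow_neg, zpow_natCast]
  obtain ⟨h1, h5⟩ := stmt18_aux m _ h
  exact assemble (by omega) _ h1 h5
end
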